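/- arXiv:1607.01342 — 4 statements merged into one kernel-verified Lean document; each statement's English description precedes it below -/
import Mathlib

section
/- Let W ∈ ℂ[x₁,…,xₙ] be nondegenerate and quasihomogeneous with weights (q₁,…,qₙ), 0 < qᵢ < 1. Then: (1) the class of Hess(W) in Q_W is nonzero and is homogeneous of weighted degree Σᵢ(1 − 2qᵢ); (2) the homogeneous component of Q_W of weighted degree Σᵢ(1 − 2qᵢ) is one-dimensional, spanned by [Hess(W)]; and (3) every homogeneous component of Q_W of weighted degree strictly greater than Σᵢ(1 − 2qᵢ) is zero. -/
open MvPolynomial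
open scoped TensorProduct

noncomputable section

namespace LG

variable {σ : Type*} [Fintype σ] [DecidableEq σ]

/-- The Jacobian ideal of a polynomial `W`, generated by its partial derivatives. -/
def jacobianIdeal (W : MvPolynomial σ ℂ) : Ideal (MvPolynomial σ ℂ) :=
  Ideal.span (Set.range fun i => pderiv i W)

/-- The Milnor ring (local algebra) `Q_W = ℂ[x]/(∂W/∂x₁,…,∂W/∂xₙ)`. -/
abbrev MilnorRing (W : MvPolynomial σ ℂ) :=
  MvPolynomial σ ℂ ⧸ jacobianIdeal W

/-- The canonical projection onto the Milnor ring. -/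
def mkQ (W : MvPolynomial σ ℂ) : MvPolynomial σ ℂ →ₐ[ℂ] MilnorRing W :=
  Ideal.Quotient.mkₐ ℂ (jacobianIdeal W)

/-- `W` is quasihomogeneous with (positive rational) weights `q`:
every monomial `x^a` occurring in `W` satisfies `∑ i, a i * q i = 1`. -/
def IsQuasiHomogeneous (W : MvPolynomial σ ℂ) (q : σ → ℚ) : Prop :=
  (∀ i, 0 < q i) ∧ ∀ a ∈ W.support, ∑ i, (a i : ℚ) * q i = 1

/-- `W` is nondegenerate: the origin is the only common zero of its partial
derivatives. -/
def Nondegenerate (W : MvPolynomial σ ℂ) : Prop :=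
  ∀ x : σ → ℂ, (∀ i, eval x (pderiv i W) = 0) → x = 0

/-- `W` is admissible with weights `q`: nondegenerate, quasihomogeneous with
uniquely determined weights, and without cross-term monomials `xᵢxⱼ` (`i ≠ j`). -/
def Admissible (W : MvPolynomial σ ℂ) (q : σ → ℚ) : Prop :=
  Nondegenerate W ∧ IsQuasiHomogeneous W q ∧
    (∀ q', IsQuasiHomogeneous W q' → q' = q) ∧
    ∀ a ∈ W.support, ∀ i j, i ≠ j → a ≠ Finsupp.single i 1 + Finsupp.single j 1

/-- The Hessian of `W`: the determinant of the matrix of second partial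
derivatives. -/
def hess (W : MvPolynomial σ ℂ) : MvPolynomial σ ℂ :=
  Matrix.det (Matrix.of fun i j => pderiv i (pderiv j W))

/-- The homogeneous component of the Milnor ring of weighted degree `d`:
the image in `Q_W` of the span of the monomials of weighted degree `d`. -/
def gradedPiece (W : MvPolynomial σ ℂ) (q : σ → ℚ) (d : ℚ) :
    Submodule ℂ (MilnorRing W) :=
  (weightedHomogeneousSubmodule ℂ q d).map (mkQ W).toLinearMap

/-- The top weighted degree `∑ᵢ (1 - 2qᵢ)` of the Milnor ring. -/
def topDegree (q : σ → ℚ) : ℚ := ∑ i, (1 - 2 * q i)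

/-- The part of the Milnor ring of weighted degree below the top degree. -/
def belowTop (W : MvPolynomial σ ℂ) (q : σ → ℚ) : Submodule ℂ (MilnorRing W) :=
  ⨆ (d : ℚ) (_ : d < topDegree q), gradedPiece W q d

/-- `p` is the pairing of the Milnor ring of `W`: the top weighted-degree
homogeneous component of `a * b` equals `(p a b / μ) • [Hess W]`, i.e.
`a * b - (p a b / μ) • [Hess W]` lies in the part of degree `< topDegree q`. -/
def IsMilnorPairing (W : MvPolynomial σ ℂ) (q : σ → ℚ)
    (p : MilnorRing W → MilnorRing W → ℂ) : Prop :=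
  ∀ a b : MilnorRing W,
    a * b - (p a b / (Module.finrank ℂ (MilnorRing W) : ℂ)) • mkQ W (hess W)
      ∈ belowTop W q

/-- The rescaling substitution `xᵢ ↦ ζᵢ · xᵢ`. -/
def scaleVars (ζ : σ → ℂ) : MvPolynomial σ ℂ →ₐ[ℂ] MvPolynomial σ ℂ :=
  aeval fun i => C (ζ i) * X i

/-- `φ : Q_W → Q_V` is equivariant for the diagonal symmetry `ζ`, expressed on
representatives: the action of `ζ` sends the class of `p` to
`det ζ • [p ∘ ζ]`, and `φ` intertwines the two actions. -/
def EquivariantAt (W V : MvPolynomial σ ℂ)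
    (φ : MilnorRing W → MilnorRing V) (ζ : σ → ℂ) : Prop :=
  ∀ p r : MvPolynomial σ ℂ, φ (mkQ W p) = mkQ V r →
    φ ((∏ i, ζ i) • mkQ W (scaleVars ζ p)) = (∏ i, ζ i) • mkQ V (scaleVars ζ r)

/-- `φ : Q_W → Q_V` preserves the weighted grading. -/
def PreservesGrading {σ τ : Type*} [Fintype σ] [DecidableEq σ]
    [Fintype τ] [DecidableEq τ]
    {W : MvPolynomial σ ℂ} {V : MvPolynomial τ ℂ}
    (φ : MilnorRing W → MilnorRing V) (qW : σ → ℚ) (qV : τ → ℚ) : Prop :=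
  ∀ d : ℚ, ∀ a ∈ gradedPiece W qW d, φ a ∈ gradedPiece V qV d

/-- `φ : Q_W → Q_V` preserves the pairings: `⟨a,b⟩_{Q_W} = ⟨φ a, φ b⟩_{Q_V}`. -/
def PreservesPairings {σ τ : Type*} [Fintype σ] [DecidableEq σ]
    [Fintype τ] [DecidableEq τ]
    {W : MvPolynomial σ ℂ} {V : MvPolynomial τ ℂ}
    (φ : MilnorRing W → MilnorRing V) (qW : σ → ℚ) (qV : τ → ℚ) : Prop :=
  ∀ pW pV, IsMilnorPairing W qW pW → IsMilnorPairing V qV pV →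
    ∀ a b, pW a b = pV (φ a) (φ b)

end LG

open LG

namespace KZ

open Matrix

/-- A (finite, explicit) Koszul cochain complex of a list of ring elements. -/
structure Koz {R : Type} [CommRing R] (l : List R) where
  S : Type
  fin : Fintype S
  dec : DecidableEq S
  deg : S → ℕ
  D : Matrix S S R
  DD : D * D = 0
  hdeg : ∀ s t, D s t ≠ 0 → deg s = deg t + 1
  hmem : ∀ s t, D s t ∈ Ideal.span {x | x ∈ l}
  bot : S
  hbot : ∀ s, deg s = 0 ↔ s = bot
  top : S
  htop : ∀ s, deg s = l.length ↔ s = top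
  hle : ∀ s, deg s ≤ l.length
  hom : ∀ g ∈ l, ∃ H : Matrix S S R, D * H + H * D = g • (1 : Matrix S S R) ∧
    ∀ s t, H s t ≠ 0 → deg s + 1 = deg t

theorem exists_koz {R : Type} [CommRing R] (l : List R) : Nonempty (Koz l) := by
  induction l with
  | nil =>
    exact ⟨{ S := Unit, fin := inferInstance, dec := inferInstance, deg := fun _ => 0, D := 0,
             DD := by simp, hdeg := by simp, hmem := by simp, bot := (), hbot := by simp,
             top := (), htop := by simp, hle := by simp, hom := by simp }⟩
  | cons g l ih =>
    obtain ⟨K⟩ := ih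
    let _ := K.fin
    let _ := K.dec
    have hle : Ideal.span {x | x ∈ l} ≤ Ideal.span {x | x ∈ g :: l} :=
      Ideal.span_mono (fun x hx => List.mem_cons_of_mem _ hx)
    have hg : g ∈ Ideal.span {x | x ∈ g :: l} := Ideal.subset_span (by simp)
    refine ⟨{ S := K.S ⊕ K.S, fin := inferInstance, dec := inferInstance,
              deg := Sum.elim K.deg (fun s => K.deg s + 1),
              D := fromBlocks K.D 0 (g • 1) (-K.D), DD := ?_, hdeg := ?_, hmem := ?_,
              bot := Sum.inl K.bot, hbot := ?_, top := Sum.inr K.top, htop := ?_,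
              hle := ?_, hom := ?_ }⟩
    · rw [fromBlocks_multiply]
      simp [K.DD]
    · rintro (s | s) (t | t) h
      · simpa using K.hdeg s t (by simpa using h)
      · simp at h
      · have : s = t := by
          by_contra hne
          simp [Matrix.one_apply, hne] at h
        simp [this]
      · simpa using K.hdeg s t (by simpa using h)
    · rintro (s | s) (t | t)
      · simpa using hle (K.hmem s t)
      · simp
      · by_cases hst : s = t <;> simp [Matrix.one_apply, hst]
        simpa using hg
      · simpa using hle (K.hmem s t)
    · rintro (s | s)
      · simpa using K.hbot s
      · simp
    · rintro (s | s)
      · have := K.hle s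
        simp; omega
      · simpa using K.htop s
    · rintro (s | s)
      · have := K.hle s
        simp; omega
      · simpa using K.hle s
    · intro g' hg'
      rcases List.mem_cons.1 hg' with rfl | hg'
      · refine ⟨fromBlocks 0 1 0 0, ?_, ?_⟩
        · rw [fromBlocks_multiply, fromBlocks_multiply, fromBlocks_add, ← fromBlocks_one,
            fromBlocks_smul]
          simp
        · rintro (s | s) (t | t) h
          · simp at h
          · have : s = t := by
              by_contra hne
              simp [Matrix.one_apply, hne] at h
            simp [this]
          · simp at h
          · simp at h
      · obtain ⟨H, h1, h2⟩ := K.hom g' hg'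
        refine ⟨fromBlocks H 0 0 (-H), ?_, ?_⟩
        · rw [fromBlocks_multiply, fromBlocks_multiply, fromBlocks_add, ← fromBlocks_one,
            fromBlocks_smul]
          simp [h1]
        · rintro (s | s) (t | t) h
          · simpa using h2 s t (by simpa using h)
          · simp at h
          · simp at h
          · simpa using h2 s t (by simpa using h)

section
variable {R : Type} [CommRing R] {l : List R} (K : Koz l)

instance : Fintype K.S := K.fin
instance : DecidableEq K.S := K.dec

/-- `v` is homogeneous of degree `i`. -/
def Hm (i : ℕ) (v : K.S → R) : Prop := ∀ s, K.deg s ≠ i → v s = 0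

/-- `v` is a coboundary (in degree `i`) modulo the ideal `J`. -/
def Cob (J : Ideal R) (i : ℕ) (v : K.S → R) : Prop :=
  ∃ η : K.S → R, (∀ s, K.deg s + 1 ≠ i → η s = 0) ∧ ∀ s, v s - (K.D *ᵥ η) s ∈ J

theorem mulVec_mem (J : Ideal R) (u : K.S → R) (hu : ∀ s, u s ∈ J) (s : K.S) :
    (K.D *ᵥ u) s ∈ J := by
  simp only [mulVec, dotProduct]
  exact Ideal.sum_mem _ fun t _ => J.mul_mem_left _ (hu t)

theorem DDv (u : K.S → R) : K.D *ᵥ (K.D *ᵥ u) = 0 := by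
  rw [mulVec_mulVec, K.DD, zero_mulVec]

variable {K}

theorem Cob.add {J : Ideal R} {i : ℕ} {v w : K.S → R} (hv : Cob K J i v) (hw : Cob K J i w) :
    Cob K J i (v + w) := by
  obtain ⟨a, ha, ha'⟩ := hv
  obtain ⟨b, hb, hb'⟩ := hw
  refine ⟨a + b, fun s hs => by simp [ha s hs, hb s hs], fun s => ?_⟩
  have := J.add_mem (ha' s) (hb' s)
  rw [mulVec_add]
  simp only [Pi.add_apply]
  convert this using 1; ring

theorem Cob.smul {J : Ideal R} {i : ℕ} {v : K.S → R} (hv : Cob K J i v) (r : R) :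
    Cob K J i (r • v) := by
  obtain ⟨a, ha, ha'⟩ := hv
  refine ⟨r • a, fun s hs => by simp [ha s hs], fun s => ?_⟩
  have := J.mul_mem_left r (ha' s)
  rw [mulVec_smul]
  simp only [Pi.smul_apply, smul_eq_mul]
  convert this using 1; ring

theorem cob_of_mem_ideal {J : Ideal R} {i : ℕ} {v : K.S → R} (hv : Hm K i v)
    (hD : ∀ s, (K.D *ᵥ v) s ∈ J) {r : R} (hr : r ∈ Ideal.span {x | x ∈ l}) :
    Cob K J i (r • v) := by
  induction hr using Submodule.span_induction with
  | mem g hg =>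
    obtain ⟨H, h1, h2⟩ := K.hom g hg
    refine ⟨H *ᵥ v, fun s hs => ?_, fun s => ?_⟩
    · simp only [mulVec, dotProduct]
      refine Finset.sum_eq_zero fun t _ => ?_
      by_cases h : H s t = 0
      · simp [h]
      · rw [hv t, mul_zero]
        have := h2 s t h
        omega
    · have h3 : g • v = K.D *ᵥ (H *ᵥ v) + H *ᵥ (K.D *ᵥ v) := by
        rw [mulVec_mulVec, mulVec_mulVec, ← add_mulVec, h1, smul_mulVec, one_mulVec]
      rw [h3]
      simp only [Pi.add_apply, add_sub_cancel_left]
      rw [mulVec, dotProduct]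
      exact Ideal.sum_mem _ fun t _ => J.mul_mem_left _ (hD t)
  | zero => exact ⟨0, by simp, by simp⟩
  | add a b _ _ ha hb => rw [add_smul]; exact ha.add hb
  | smul a b _ hb => rw [smul_eq_mul, mul_smul]; exact hb.smul a

variable {n : ℕ} {J : ℕ → Ideal R} {x : ℕ → R}

/-- Lifting step: a relation modulo `J (k+1)` is turned into one modulo `J k`. -/
theorem lift_step {k : ℕ} (hreg : ∀ u, x k * u ∈ J k → u ∈ J k)
    (hsucc : ∀ u, u ∈ J (k+1) → ∃ ξ, u - x k * ξ ∈ J k)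
    {i : ℕ} {v η : K.S → R} (hη : Hm K i η)
    (he : ∀ s, x k * v s - (K.D *ᵥ η) s ∈ J k) (hc : Cob K (J (k+1)) i η) :
    Cob K (J k) (i+1) v := by
  classical
  obtain ⟨ζ, hζ, hζ'⟩ := hc
  choose ξ hξ using fun s => hsucc _ (hζ' s)
  -- make `ξ` homogeneous
  let ξ' : K.S → R := fun s => if K.deg s = i then ξ s else 0
  have hξ' : ∀ s, η s - (K.D *ᵥ ζ) s - x k * ξ' s ∈ J k := by
    intro s
    by_cases h : K.deg s = i
    · simpa [ξ', h] using hξ s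
    · have : (K.D *ᵥ ζ) s = 0 := by
        simp only [mulVec, dotProduct]
        refine Finset.sum_eq_zero fun t _ => ?_
        by_cases h0 : K.D s t = 0
        · simp [h0]
        · rw [hζ t, mul_zero]
          have := K.hdeg s t h0
          omega
      simp [ξ', h, this, hη s h]
  refine ⟨ξ', fun s hs => by simp [ξ']; intro h; omega, fun s => hreg _ ?_⟩
  have h1 := mulVec_mem K (J k) (η - K.D *ᵥ ζ - x k • ξ') (fun s => by simpa using hξ' s) s
  rw [mulVec_sub, mulVec_sub, DDv, mulVec_smul] at h1
  have h2 := (J k).add_mem (he s) h1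
  simp only [Pi.sub_apply, Pi.smul_apply, Pi.zero_apply, smul_eq_mul] at h2
  convert h2 using 1; ring

theorem D_mem_succ {k : ℕ} (hx : x k ∈ J (k+1)) (hJ : J k ≤ J (k+1))
    {v η : K.S → R} (he : ∀ s, x k * v s - (K.D *ᵥ η) s ∈ J k) (s : K.S) :
    (K.D *ᵥ η) s ∈ J (k+1) := by
  have := (J (k+1)).sub_mem ((J (k+1)).mul_mem_right (v s) hx) (hJ (he s))
  simpa using this

theorem vanish (hreg : ∀ k < n, ∀ u, x k * u ∈ J k → u ∈ J k)
    (hsucc : ∀ k < n, ∀ u, u ∈ J (k+1) → ∃ ξ, u - x k * ξ ∈ J k)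
    (hx : ∀ k < n, x k ∈ J (k+1)) (hJ : ∀ k < n, J k ≤ J (k+1))
    (hpow : ∀ k < n, ∃ N, x k ^ N ∈ Ideal.span {y | y ∈ l}) (i : ℕ) :
    ∀ k, k + i < n → ∀ v : K.S → R, Hm K i v → (∀ s, (K.D *ᵥ v) s ∈ J k) →
      Cob K (J k) i v := by
  induction i with
  | zero =>
    intro k hk v hv hD
    obtain ⟨N, hN⟩ := hpow k (by omega)
    obtain ⟨η, h0, h1⟩ := cob_of_mem_ideal hv hD hN
    have : η = 0 := by ext s; exact h0 s (by omega)
    subst this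
    refine ⟨0, by simp, fun s => ?_⟩
    have h2 := h1 s
    simp only [mulVec_zero, Pi.zero_apply, sub_zero, Pi.smul_apply, smul_eq_mul] at h2 ⊢
    clear h1 hN
    induction N with
    | zero => simpa using h2
    | succ N ih =>
      exact ih (hreg k (by omega) _ (by convert h2 using 1; ring))
  | succ i ih =>
    intro k hk v hv hD
    obtain ⟨N, hN⟩ := hpow k (by omega)
    have h1 := cob_of_mem_ideal hv hD hN
    clear hN
    induction N with
    | zero => simpa using h1
    | succ N ihN =>
      apply ihN
      obtain ⟨η, h0, h2⟩ := h1
      have hη : Hm K i η := fun s hs => h0 s (by omega)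
      have he : ∀ s, x k * (x k ^ N • v) s - (K.D *ᵥ η) s ∈ J k := by
        intro s
        convert h2 s using 1
        simp; ring
      refine lift_step (hreg k (by omega)) (hsucc k (by omega)) hη he ?_
      exact ih (k+1) (by omega) η hη (D_mem_succ (hx k (by omega)) (hJ k (by omega)) he)

theorem socle {F : Type} [Field F] [Algebra F R]
    (hreg : ∀ k < n, ∀ u, x k * u ∈ J k → u ∈ J k)
    (hsucc : ∀ k < n, ∀ u, u ∈ J (k+1) → ∃ ξ, u - x k * ξ ∈ J k)
    (hx : ∀ k < n, x k ∈ J (k+1)) (hJ : ∀ k < n, J k ≤ J (k+1))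
    (hpow : ∀ k < n, ∃ N, x k ^ N ∈ Ideal.span {y | y ∈ l})
    (hn : ∀ u, ∃ c : F, u - algebraMap F R c ∈ J n) (i : ℕ) :
    ∀ k, k + i = n → ∀ v w : K.S → R, Hm K i v → Hm K i w →
      (∀ j, k ≤ j → j < n → Cob K (J k) i (x j • v)) →
      (∀ j, k ≤ j → j < n → Cob K (J k) i (x j • w)) →
      ∃ a b : F, (a ≠ 0 ∨ b ≠ 0) ∧
        Cob K (J k) i (algebraMap F R a • v + algebraMap F R b • w) := by
  induction i with
  | zero =>
    rintro k hk v w hv hw - -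
    obtain rfl : k = n := by omega
    obtain ⟨c, hc⟩ := hn (v K.bot)
    obtain ⟨d, hd⟩ := hn (w K.bot)
    have key : ∀ a b : F, a * c + b * d = 0 →
        Cob K (J k) 0 (algebraMap F R a • v + algebraMap F R b • w) := by
      intro a b hab
      refine ⟨0, by simp, fun s => ?_⟩
      by_cases hs : K.deg s = 0
      · rw [K.hbot] at hs
        subst hs
        have h1 := (J k).add_mem ((J k).mul_mem_left (algebraMap F R a) hc)
          ((J k).mul_mem_left (algebraMap F R b) hd)
        have h2 : algebraMap F R a * algebraMap F R c + algebraMap F R b * algebraMap F R d = 0 := by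
          rw [← map_mul, ← map_mul, ← map_add, hab, map_zero]
        simp only [mulVec_zero, Pi.zero_apply, sub_zero, Pi.add_apply, Pi.smul_apply, smul_eq_mul]
        convert h1 using 1
        linear_combination h2
      · simp [hv s hs, hw s hs]
    by_cases hd0 : d = 0
    · exact ⟨0, 1, by simp, key _ _ (by simp [hd0])⟩
    · exact ⟨d, -c, by simp [hd0], key _ _ (by ring)⟩
  | succ i ih =>
    intro k hk v w hv hw hsv hsw
    have main : ∀ v : K.S → R, (∀ j, k ≤ j → j < n → Cob K (J k) (i+1) (x j • v)) →
        ∃ η : K.S → R, Hm K i η ∧ (∀ s, x k * v s - (K.D *ᵥ η) s ∈ J k) ∧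
          ∀ j, k + 1 ≤ j → j < n → Cob K (J (k+1)) i (x j • η) := by
      intro v hsv
      obtain ⟨η, h0, h1⟩ := hsv k le_rfl (by omega)
      have hη : Hm K i η := fun s hs => h0 s (by omega)
      refine ⟨η, hη, by simpa using h1, fun j hj hjn => ?_⟩
      obtain ⟨θ, h2, h3⟩ := hsv j (by omega) hjn
      have h4 := vanish (K := K) hreg hsucc hx hJ hpow i k (by omega) (x j • η - x k • θ)
        (fun s hs => by simp [h0 s (by omega), h2 s (by omega)]) (fun s => by
          have := (J k).sub_mem ((J k).mul_mem_left (x k) (h3 s))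
            ((J k).mul_mem_left (x j) (h1 s))
          rw [mulVec_sub, mulVec_smul, mulVec_smul]
          simp only [Pi.sub_apply, Pi.smul_apply, smul_eq_mul] at this ⊢
          convert this using 1; ring)
      obtain ⟨ζ, h5, h6⟩ := h4
      refine ⟨ζ, h5, fun s => ?_⟩
      have := (J (k+1)).add_mem (hJ k (by omega) (h6 s))
        ((J (k+1)).mul_mem_right (θ s) (hx k (by omega)))
      simp only [Pi.sub_apply, Pi.smul_apply, smul_eq_mul] at this ⊢
      convert this using 1; ring
    obtain ⟨η, a1, a2, a3⟩ := main v hsv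
    obtain ⟨θ, b1, b2, b3⟩ := main w hsw
    obtain ⟨a, b, hab, hc⟩ := ih (k+1) (by omega) η θ a1 b1 a3 b3
    refine ⟨a, b, hab, ?_⟩
    refine lift_step (hreg k (by omega)) (hsucc k (by omega))
      (fun s hs => by simp [a1 s hs, b1 s hs]) (fun s => ?_) hc
    have := (J k).add_mem ((J k).mul_mem_left (algebraMap F R a) (a2 s))
      ((J k).mul_mem_left (algebraMap F R b) (b2 s))
    rw [mulVec_add, mulVec_smul, mulVec_smul]
    simp only [Pi.add_apply, Pi.smul_apply, smul_eq_mul] at this ⊢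
    convert this using 1; ring

end

/-- The socle of `R / (l)` is at most one-dimensional. -/
theorem socle_dim {R : Type} [CommRing R] {l : List R} {n : ℕ} {J : ℕ → Ideal R} {x : ℕ → R}
    (hl : l.length = n)
    {F : Type} [Field F] [Algebra F R]
    (hreg : ∀ k < n, ∀ u, x k * u ∈ J k → u ∈ J k)
    (hsucc : ∀ k < n, ∀ u, u ∈ J (k+1) → ∃ ξ, u - x k * ξ ∈ J k)
    (hx : ∀ k < n, x k ∈ J (k+1)) (hJ : ∀ k < n, J k ≤ J (k+1))
    (hpow : ∀ k < n, ∃ N, x k ^ N ∈ Ideal.span {y | y ∈ l})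
    (hn : ∀ u, ∃ c : F, u - algebraMap F R c ∈ J n) (hJ0 : J 0 = ⊥)
    (p h : R) (hp : ∀ j < n, x j * p ∈ Ideal.span {y | y ∈ l})
    (hh : ∀ j < n, x j * h ∈ Ideal.span {y | y ∈ l}) :
    ∃ a b : F, (a ≠ 0 ∨ b ≠ 0) ∧
      algebraMap F R a * p + algebraMap F R b * h ∈ Ideal.span {y | y ∈ l} := by
  classical
  obtain ⟨K⟩ := exists_koz l
  let e : K.S → R := Pi.single K.top 1
  have he : Hm K n e := by
    intro s hs
    have : s ≠ K.top := fun h => hs (by rw [← hl]; exact (K.htop s).2 h)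
    simp [e, this]
  have hDe : ∀ s, (K.D *ᵥ e) s ∈ J 0 := by
    intro s
    have : K.D s K.top = 0 := by
      by_contra h0
      have h1 := K.hdeg s _ h0
      have h2 := (K.htop K.top).2 rfl
      have h3 := K.hle s
      omega
    simp [e, this]
  obtain ⟨a, b, hab, η, -, h2⟩ := socle (K := K) (F := F) hreg hsucc hx hJ hpow hn n 0 (by simp)
    (p • e) (h • e)
    (fun s hs => by simp [he s hs]) (fun s hs => by simp [he s hs])
    (fun j _ hj => by rw [smul_smul]; exact cob_of_mem_ideal he hDe (hp j hj))
    (fun j _ hj => by rw [smul_smul]; exact cob_of_mem_ideal he hDe (hh j hj))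
  refine ⟨a, b, hab, ?_⟩
  have h3 := h2 K.top
  rw [hJ0] at h3
  simp only [e, Pi.add_apply, Pi.smul_apply, smul_eq_mul, Pi.single_eq_same, mul_one,
    Ideal.mem_bot, sub_eq_zero] at h3
  rw [h3]
  simp only [mulVec, dotProduct]
  exact Ideal.sum_mem _ fun t _ => Ideal.mul_mem_right _ _ (K.hmem _ t)

end KZ

namespace KZ

open Matrix

theorem mv_socle {n : ℕ} (f : Fin n → MvPolynomial (Fin n) ℂ)
    (hpow : ∀ k, ∃ N, (X k : MvPolynomial (Fin n) ℂ) ^ N ∈ Ideal.span (Set.range f))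
    (p h : MvPolynomial (Fin n) ℂ)
    (hp : ∀ j, X j * p ∈ Ideal.span (Set.range f))
    (hh : ∀ j, X j * h ∈ Ideal.span (Set.range f)) :
    ∃ a b : ℂ, (a ≠ 0 ∨ b ≠ 0) ∧ C a * p + C b * h ∈ Ideal.span (Set.range f) := by
  have hset : {y | y ∈ List.ofFn f} = Set.range f := by
    ext y; simp [List.mem_ofFn]
  let J : ℕ → Ideal (MvPolynomial (Fin n) ℂ) := fun k =>
    Ideal.span (X '' {i : Fin n | (i : ℕ) < k})
  let x : ℕ → MvPolynomial (Fin n) ℂ := fun k => if hk : k < n then X ⟨k, hk⟩ else 0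
  have hx : ∀ k (hk : k < n), x k = X ⟨k, hk⟩ := fun k hk => by simp [x, hk]
  have h1 : ∀ k < n, ∀ u, x k * u ∈ J k → u ∈ J k := by
    intro k hk u hu
    rw [hx k hk] at hu
    simp only [J, mem_ideal_span_X_image] at hu ⊢
    intro m hm
    have h1 : m + Finsupp.single (⟨k, hk⟩ : Fin n) 1 ∈
        ((X ⟨k, hk⟩ : MvPolynomial (Fin n) ℂ) * u).support := by
      rw [mem_support_iff] at hm ⊢
      rwa [mul_comm, coeff_mul_X]
    obtain ⟨i, hi, hmi⟩ := hu _ h1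
    refine ⟨i, hi, ?_⟩
    have hne : (⟨k, hk⟩ : Fin n) ≠ i := by
      rintro rfl
      simp at hi
    simpa [Finsupp.single_apply, hne] using hmi
  have h2 : ∀ k < n, ∀ u, u ∈ J (k+1) → ∃ ξ, u - x k * ξ ∈ J k := by
    intro k hk u hu
    have : {i : Fin n | (i : ℕ) < k + 1} = insert ⟨k, hk⟩ {i : Fin n | (i : ℕ) < k} := by
      ext i
      simp [Fin.ext_iff]
      omega
    simp only [J, this, Set.image_insert_eq] at hu
    rw [Ideal.mem_span_insert] at hu
    obtain ⟨a, z, hz, rfl⟩ := hu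
    refine ⟨a, ?_⟩
    rw [hx k hk]
    have e : a * X ⟨k, hk⟩ + z - X ⟨k, hk⟩ * a = z := by ring
    rw [e]
    exact hz
  have h3 : ∀ k < n, x k ∈ J (k+1) := by
    intro k hk
    rw [hx k hk]
    exact Ideal.subset_span ⟨_, by simp, rfl⟩
  have h4 : ∀ k < n, J k ≤ J (k+1) := by
    intro k hk
    apply Ideal.span_mono
    apply Set.image_mono
    intro i hi
    simp at hi ⊢
    omega
  have h5 : ∀ k < n, ∃ N, x k ^ N ∈ Ideal.span {y | y ∈ List.ofFn f} := by
    intro k hk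
    rw [hset, hx k hk]
    exact hpow _
  have h6 : ∀ u, ∃ c : ℂ, u - algebraMap ℂ (MvPolynomial (Fin n) ℂ) c ∈ J n := by
    intro u
    refine ⟨constantCoeff u, ?_⟩
    simp only [J, mem_ideal_span_X_image]
    intro m hm
    by_contra hcon
    push Not at hcon
    have hm0 : m = 0 := by
      ext i
      simpa using hcon i (by simp)
    subst hm0
    simp [algebraMap_eq, constantCoeff_eq] at hm
  have h7 : J 0 = ⊥ := by simp [J]
  have h8 := socle_dim (l := List.ofFn f) (n := n) (J := J) (x := x) (F := ℂ) (by simp)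
    h1 h2 h3 h4 h5 h6 h7 p h
    (fun j hj => by rw [hset, hx j hj]; exact hp _) (fun j hj => by rw [hset, hx j hj]; exact hh _)
  rw [hset] at h8
  exact h8

/-- Cramer's rule: `det M * v_k` is in the ideal of the entries of `M v`. -/
theorem cramer_mem {m : Type} [Fintype m] [DecidableEq m] {R : Type} [CommRing R] (I : Ideal R)
    (M : Matrix m m R) (v : m → R) (hM : ∀ i, (M *ᵥ v) i ∈ I) (k : m) : M.det * v k ∈ I := by
  have h1 : M.adjugate *ᵥ (M *ᵥ v) = M.det • v := by
    rw [mulVec_mulVec, adjugate_mul, smul_mulVec, one_mulVec]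
  have h2 := congrFun h1 k
  simp only [Pi.smul_apply, smul_eq_mul] at h2
  rw [← h2, mulVec, dotProduct]
  exact Ideal.sum_mem _ fun t _ => I.mul_mem_left _ (hM t)

theorem det_swap {n N : ℕ} (M M' : Matrix (Fin n) (Fin n) (MvPolynomial (Fin n) ℂ))
    (hM : ∀ i, (M *ᵥ X) i = X i ^ N) (hM' : ∀ i, (M' *ᵥ X) i = X i ^ N) :
    M.det - M'.det ∈ Ideal.span (Set.range fun i : Fin n =>
      (X i : MvPolynomial (Fin n) ℂ) ^ N) := by
  classical
  have key : ∀ s : Finset (Fin n), M.det - (Matrix.of fun i => if i ∈ s then M' i else M i).det ∈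
      Ideal.span (Set.range fun i : Fin n => (X i : MvPolynomial (Fin n) ℂ) ^ N) := by
    intro s
    induction s using Finset.induction_on with
    | empty => simp; exact (by convert Ideal.zero_mem _ using 1; exact sub_self _)
    | insert k s hk ih =>
      set P : Matrix (Fin n) (Fin n) (MvPolynomial (Fin n) ℂ) :=
        Matrix.of fun i => if i ∈ s then M' i else M i with hP
      have hP1 : P = updateRow P k (M k) := by
        ext1 i
        by_cases hi : i = k
        · subst hi; simp [P, hk]
        · simp [hi]
      have hP2 : (Matrix.of fun i => if i ∈ insert k s then M' i else M i) =
          updateRow P k (M' k) := by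
        ext1 i
        by_cases hi : i = k
        · subst hi; simp
        · simp [hi, P]
      have hd : P.det = (updateRow P k (M' k)).det + (updateRow P k (M k - M' k)).det := by
        rw [← det_updateRow_add, add_sub_cancel, ← hP1]
      rw [hP2]
      have hQ : (updateRow P k (M k - M' k)).det ∈ Ideal.span (Set.range fun i : Fin n =>
          (X i : MvPolynomial (Fin n) ℂ) ^ N) := by
        have h1 := cramer_mem (Ideal.span ((fun s => monomial s (1 : ℂ)) ''
          {m | ∃ i : Fin n, i ≠ k ∧ m = Finsupp.single i N})) (updateRow P k (M k - M' k)) X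
          (fun i => by
            by_cases hi : i = k
            · subst hi
              have : (updateRow P i (M i - M' i) *ᵥ X) i = 0 := by
                have e1 := hM i
                have e2 := hM' i
                simp only [mulVec] at e1 e2 ⊢
                rw [updateRow_self, sub_dotProduct, e1, e2, sub_self]
              rw [this]
              exact Ideal.zero_mem _
            · have : (updateRow P k (M k - M' k) *ᵥ X) i = X i ^ N := by
                have e1 := hM i
                have e2 := hM' i
                simp only [mulVec] at e1 e2 ⊢
                rw [updateRow_ne hi]
                by_cases his : i ∈ s <;> simp [P, his, e1, e2]
              rw [this]
              exact Ideal.subset_span ⟨Finsupp.single i N, ⟨i, hi, rfl⟩, by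
                simp [X_pow_eq_monomial]⟩) k
        rw [mem_ideal_span_monomial_image] at h1
        have h2 : (updateRow P k (M k - M' k)).det ∈ Ideal.span ((fun s => monomial s (1 : ℂ)) ''
          {m | ∃ i : Fin n, i ≠ k ∧ m = Finsupp.single i N}) := by
          rw [mem_ideal_span_monomial_image]
          intro m hm
          obtain ⟨_, ⟨i, hi, rfl⟩, hle⟩ := h1 (m + Finsupp.single k 1) (by
            rw [mem_support_iff] at hm ⊢
            rwa [coeff_mul_X])
          refine ⟨_, ⟨i, hi, rfl⟩, ?_⟩
          rw [Finsupp.single_le_iff] at hle ⊢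
          simpa [Finsupp.single_apply, hi.symm] using hle
        refine Ideal.span_mono ?_ h2
        rintro _ ⟨_, ⟨i, hi, rfl⟩, rfl⟩
        exact ⟨i, by simp [X_pow_eq_monomial]⟩
      have := Ideal.add_mem _ ih hQ
      convert this using 1
      rw [hd]; ring
  have := key Finset.univ
  have e : (Matrix.of fun i => if i ∈ (Finset.univ : Finset (Fin n)) then M' i else M i) = M' := by
    ext1 i
    simp
  rwa [e] at this

theorem det_not_mem {n : ℕ} (f : Fin n → MvPolynomial (Fin n) ℂ)
    (N : ℕ) (hN : 0 < N)
    (hpow : ∀ k, (X k : MvPolynomial (Fin n) ℂ) ^ N ∈ Ideal.span (Set.range f))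
    (B : Matrix (Fin n) (Fin n) (MvPolynomial (Fin n) ℂ)) (hB : B *ᵥ X = f) :
    B.det ∉ Ideal.span (Set.range f) := by
  intro hcon
  have hA : ∀ k, ∃ a : Fin n → MvPolynomial (Fin n) ℂ, ∑ j, a j * f j = X k ^ N := by
    intro k
    have := hpow k
    rwa [Ideal.mem_span_range_iff_exists_fun] at this
  choose A hA using hA
  let A' : Matrix (Fin n) (Fin n) (MvPolynomial (Fin n) ℂ) := Matrix.of A
  have hAf : ∀ i, (A' *ᵥ f) i = X i ^ N := fun i => hA i
  have h1 : A'.det * B.det ∈ Ideal.span (Set.range fun i : Fin n =>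
      (X i : MvPolynomial (Fin n) ℂ) ^ N) := by
    rw [Ideal.mem_span_range_iff_exists_fun] at hcon
    obtain ⟨c, hc⟩ := hcon
    rw [← hc, Finset.mul_sum]
    refine Ideal.sum_mem _ fun j _ => ?_
    have := cramer_mem (Ideal.span (Set.range fun i : Fin n =>
      (X i : MvPolynomial (Fin n) ℂ) ^ N)) A' f
      (fun i => by rw [hAf]; exact Ideal.subset_span ⟨i, rfl⟩) j
    convert Ideal.mul_mem_left _ (c j) this using 1
    ring
  have h2 := det_swap (N := N) (A' * B)
    (diagonal fun i : Fin n => (X i : MvPolynomial (Fin n) ℂ) ^ (N-1))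
    (fun i => by rw [← mulVec_mulVec, hB, hAf])
    (fun i => by rw [mulVec_diagonal, ← pow_succ]; congr 1; omega)
  rw [det_mul] at h2
  have h3 := Ideal.sub_mem _ h1 h2
  rw [sub_sub_cancel, det_diagonal] at h3
  have h4 : (Set.range fun i : Fin n => (X i : MvPolynomial (Fin n) ℂ) ^ N) =
      (fun s => monomial s (1 : ℂ)) '' (Set.range fun i : Fin n => Finsupp.single i N) := by
    ext y
    simp [X_pow_eq_monomial]
  rw [h4, mem_ideal_span_monomial_image] at h3
  have h5 : (∏ i : Fin n, (X i : MvPolynomial (Fin n) ℂ) ^ (N-1)) =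
      monomial (Finsupp.equivFunOnFinite.symm fun _ => N-1) 1 := by
    rw [monomial_eq, Finsupp.prod_fintype _ _ (by simp)]
    simp
  obtain ⟨_, ⟨i, rfl⟩, hle⟩ := h3 (Finsupp.equivFunOnFinite.symm fun _ => N-1) (by
    rw [h5, mem_support_iff, coeff_monomial]; simp)
  rw [Finsupp.single_le_iff] at hle
  simp at hle
  omega

theorem euler {n : ℕ} (q : Fin n → ℚ) (d : ℚ) (p : MvPolynomial (Fin n) ℂ)
    (hp : IsWeightedHomogeneous q p d) :
    ∑ j, C (q j : ℂ) * (X j * pderiv j p) = C (d : ℂ) * p := by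
  induction hp using IsWeightedHomogeneous.induction_on with
  | zero => simp
  | add a b _ _ ha hb =>
    rw [mul_add, ← ha, ← hb, ← Finset.sum_add_distrib]
    refine Finset.sum_congr rfl fun j _ => ?_
    rw [map_add]; ring
  | monomial m r hm =>
    simp_rw [X_mul_pderiv_monomial]
    have : (d : ℂ) = ∑ j, (q j : ℂ) * (m j : ℂ) := by
      rw [← hm, Finsupp.weight_apply, Finsupp.sum_fintype _ _ (by simp)]
      push_cast
      refine Finset.sum_congr rfl fun j _ => ?_
      simp [mul_comm]
    rw [this, map_sum, Finset.sum_mul]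
    refine Finset.sum_congr rfl fun j _ => ?_
    rw [map_mul, mul_assoc]
    congr 1
    simp [nsmul_eq_mul]

end KZ

namespace KZ

open Matrix

attribute [local instance] MvPolynomial.weightedGradedAlgebra

theorem jac_homog {n : ℕ} (q : Fin n → ℚ) (f : Fin n → MvPolynomial (Fin n) ℂ) (d : Fin n → ℚ)
    (hf : ∀ i, IsWeightedHomogeneous q (f i) (d i)) {p : MvPolynomial (Fin n) ℂ}
    (hp : p ∈ Ideal.span (Set.range f)) (e : ℚ) :
    weightedHomogeneousComponent q e p ∈ Ideal.span (Set.range f) := by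
  refine weightedHomogeneousComponent_mem_of_mem ℂ q ?_ hp e
  refine Ideal.homogeneous_span _ _ ?_
  rintro _ ⟨i, rfl⟩
  exact ⟨d i, hf i⟩

theorem to_socle {n : ℕ} (q : Fin n → ℚ) (hq : ∀ i, 0 < q i)
    (I : Ideal (MvPolynomial (Fin n) ℂ)) (j : ℕ) :
    ∀ (p : MvPolynomial (Fin n) ℂ) (e : ℚ), IsWeightedHomogeneous q p e → p ∉ I →
      (∀ r ∈ idealOfVars (Fin n) ℂ ^ j, r * p ∈ I) →
      ∃ p' e', IsWeightedHomogeneous q p' e' ∧ p' ∉ I ∧ (∀ i, X i * p' ∈ I) ∧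
        (e < e' ∨ (e' = e ∧ p' = p)) := by
  induction j with
  | zero =>
    intro p e _ hp h
    exact absurd (by simpa using h 1 (by simp)) hp
  | succ j ih =>
    intro p e he hp h
    by_cases hs : ∀ i, X i * p ∈ I
    · exact ⟨p, e, he, hp, hs, Or.inr ⟨rfl, rfl⟩⟩
    · push Not at hs
      obtain ⟨i, hi⟩ := hs
      obtain ⟨p', e', h1, h2, h3, h4⟩ := ih (X i * p) (q i + e)
        ((isWeightedHomogeneous_X ℂ q i).mul he) hi (fun r hr => by
          rw [← mul_assoc]
          refine h _ ?_
          rw [pow_succ]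
          exact Ideal.mul_mem_mul hr (Ideal.subset_span ⟨i, rfl⟩))
      refine ⟨p', e', h1, h2, h3, Or.inl ?_⟩
      have := hq i
      rcases h4 with h4 | ⟨h4, -⟩ <;> linarith

theorem hess_homog {n : ℕ} (q : Fin n → ℚ) (W : MvPolynomial (Fin n) ℂ)
    (hW : IsWeightedHomogeneous q W 1) : IsWeightedHomogeneous q (hess W) (topDegree q) := by
  rw [hess, det_apply]
  refine IsWeightedHomogeneous.sum _ _ _ fun τ _ => ?_
  have h1 : IsWeightedHomogeneous q
      (∏ i, (Matrix.of fun i j => pderiv i (pderiv j W)) (τ i) i) (topDegree q) := by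
    have := IsWeightedHomogeneous.prod Finset.univ
      (fun i => (Matrix.of fun i j => pderiv i (pderiv j W)) (τ i) i)
      (fun i => 1 - q i - q (τ i)) (w := q)
      (fun i _ => (hW.pderiv (i := i) (n' := 1 - q i) (by ring)).pderiv
        (i := τ i) (n' := 1 - q i - q (τ i)) (by ring))
    convert this using 1
    rw [topDegree, Finset.sum_sub_distrib, Finset.sum_sub_distrib, Finset.sum_sub_distrib,
      Equiv.sum_comp τ q, ← Finset.mul_sum]
    ring
  rcases Int.units_eq_one_or (Equiv.Perm.sign τ) with h | h <;> rw [h]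
  · simpa using h1
  · simpa using h1.neg

end KZ

/-- (1) the class of `Hess W` in `Q_W` is nonzero and homogeneous
of weighted degree `∑ᵢ (1 - 2qᵢ)`; (2) the component of that degree is spanned
by `[Hess W]`; (3) all components of strictly larger degree vanish. -/
theorem hessian_spans_top_degree {n : ℕ}
    (W : MvPolynomial (Fin n) ℂ) (q : Fin n → ℚ)
    (hq : ∀ i, 0 < q i ∧ q i < 1)
    (hnd : Nondegenerate W) (hqh : IsQuasiHomogeneous W q) :
    (mkQ W (hess W) ≠ 0 ∧ mkQ W (hess W) ∈ gradedPiece W q (topDegree q)) ∧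
    gradedPiece W q (topDegree q) = Submodule.span ℂ {mkQ W (hess W)} ∧
    (∀ d : ℚ, topDegree q < d → gradedPiece W q d = ⊥) := by
  have hmk : ∀ p, mkQ W p = 0 ↔ p ∈ jacobianIdeal W := fun p => Ideal.Quotient.eq_zero_iff_mem
  have hW : IsWeightedHomogeneous q W 1 := by
    intro m hm
    rw [← hqh.2 m (mem_support_iff.2 hm), Finsupp.weight_apply, Finsupp.sum_fintype _ _ (by simp)]
    simp
  have hd : ∀ i, IsWeightedHomogeneous q (pderiv i W) (1 - q i) :=
    fun i => hW.pderiv (by ring)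
  have hH := KZ.hess_homog q W hW
  -- Nullstellensatz
  have hrad : idealOfVars (Fin n) ℂ ≤ (jacobianIdeal W).radical := by
    rw [← vanishingIdeal_zeroLocus_eq_radical (K := ℂ), Ideal.span_le]
    rintro _ ⟨i, rfl⟩
    simp only [SetLike.mem_coe, mem_vanishingIdeal_iff]
    intro x hx
    have : x = 0 := hnd x fun i => by
      have := hx (pderiv i W) (Ideal.subset_span ⟨i, rfl⟩)
      simpa [aeval_eq_eval] using this
    simp [this]
  obtain ⟨N, hN⟩ := Ideal.exists_pow_le_of_le_radical_of_fg hrad (idealOfVars_fg (Fin n) ℂ)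
  have hpow : ∀ k, (X k : MvPolynomial (Fin n) ℂ) ^ (N+1) ∈ jacobianIdeal W := fun k =>
    have hk : (X k : MvPolynomial (Fin n) ℂ) ∈ idealOfVars (Fin n) ℂ :=
      Ideal.subset_span (Set.mem_range_self k)
    hN (Ideal.pow_le_pow_right (Nat.le_succ N) (Ideal.pow_mem_pow hk _))
  -- the Euler matrix
  let B : Matrix (Fin n) (Fin n) (MvPolynomial (Fin n) ℂ) :=
    Matrix.of fun i j => C ((1 - (q i : ℂ))⁻¹) * (C (q j : ℂ) * pderiv j (pderiv i W))
  have hq1 : ∀ i, (1 - (q i : ℂ)) ≠ 0 := by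
    intro i h
    have h2 : ((1 - q i : ℚ) : ℂ) = 0 := by push_cast; exact h
    have h3 : (1 - q i : ℚ) = 0 := by exact_mod_cast h2
    have := (hq i).2
    linarith
  have hq0 : ∀ i, (q i : ℂ) ≠ 0 := by
    intro i h
    have h3 : q i = 0 := by exact_mod_cast h
    have := (hq i).1
    linarith
  have hB : B.mulVec X = fun i => pderiv i W := by
    ext1 i
    have h1 := KZ.euler q (1 - q i) (pderiv i W) (hd i)
    have h2 : C ((1 - (q i : ℂ))⁻¹) * (C ((1 - q i : ℚ) : ℂ) * pderiv i W) = pderiv i W := by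
      rw [← mul_assoc, ← C_mul]
      push_cast
      rw [inv_mul_cancel₀ (hq1 i), C_1, one_mul]
    rw [← h2, ← h1, Finset.mul_sum]
    simp only [Matrix.mulVec, dotProduct, B, Matrix.of_apply]
    refine Finset.sum_congr rfl fun j _ => ?_
    ring
  have hBdet : ∃ c : ℂ, c ≠ 0 ∧ B.det = C c * hess W := by
    refine ⟨(∏ i, (1 - (q i : ℂ))⁻¹) * ∏ j, (q j : ℂ), ?_, ?_⟩
    · exact mul_ne_zero (Finset.prod_ne_zero_iff.2 fun i _ => inv_ne_zero (hq1 i))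
        (Finset.prod_ne_zero_iff.2 fun i _ => hq0 i)
    · have e : B = Matrix.of fun i j => C ((1 - (q i : ℂ))⁻¹) *
          (Matrix.of fun i j => C (q j : ℂ) * (Matrix.of fun i j => pderiv j (pderiv i W)) i j) i j := rfl
      rw [e, Matrix.det_mul_column, Matrix.det_mul_row, hess,
        ← Matrix.det_transpose (Matrix.of fun i j => pderiv i (pderiv j W)), C_mul, map_prod, map_prod,
        mul_assoc]
      rfl
  obtain ⟨c, hc, hcB⟩ := hBdet
  have hHB : hess W = C c⁻¹ * B.det := by
    rw [hcB, ← mul_assoc, ← C_mul, inv_mul_cancel₀ hc, C_1, one_mul]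
  have hHI : hess W ∉ jacobianIdeal W := by
    intro h
    refine KZ.det_not_mem (fun i => pderiv i W) (N+1) (by omega) hpow B hB ?_
    rw [hcB]
    exact Ideal.mul_mem_left _ _ h
  have hHs : ∀ j, X j * hess W ∈ jacobianIdeal W := by
    intro j
    have := KZ.cramer_mem (jacobianIdeal W) B X
      (fun i => by rw [hB]; exact Ideal.subset_span ⟨i, rfl⟩) j
    rw [hHB]
    convert Ideal.mul_mem_left _ (C c⁻¹) this using 1
    ring
  -- the key dichotomy
  have key : ∀ p e, IsWeightedHomogeneous q p e → p ∉ jacobianIdeal W →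
      e < topDegree q ∨ (e = topDegree q ∧ ∃ c : ℂ, p - C c * hess W ∈ jacobianIdeal W) := by
    intro p e hp hpI
    obtain ⟨p', e', h1, h2, h3, h4⟩ := KZ.to_socle q (fun i => (hq i).1) (jacobianIdeal W) N p e hp
      hpI (fun r hr => Ideal.mul_mem_right _ _ (hN hr))
    obtain ⟨a, b, hab, hmem⟩ := KZ.mv_socle (fun i => pderiv i W) (fun k => ⟨_, hpow k⟩)
      p' (hess W) h3 hHs
    have ha : a ≠ 0 := by
      rintro rfl
      have hb : b ≠ 0 := by simpa using hab
      apply hHI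
      have := Ideal.mul_mem_left _ (C b⁻¹) hmem
      rw [C_0, zero_mul, zero_add, ← mul_assoc, ← C_mul, inv_mul_cancel₀ hb, C_1, one_mul] at this
      exact this
    have he' : e' = topDegree q := by
      by_contra hne
      apply h2
      have h5 := KZ.jac_homog q (fun i => pderiv i W) (fun i => 1 - q i) hd hmem e'
      rw [map_add, weightedHomogeneousComponent_C_mul, weightedHomogeneousComponent_C_mul,
        h1.weightedHomogeneousComponent_same,
        hH.weightedHomogeneousComponent_ne e' hne, mul_zero, add_zero] at h5
      have := Ideal.mul_mem_left _ (C a⁻¹) h5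
      rw [← mul_assoc, ← C_mul, inv_mul_cancel₀ ha, C_1, one_mul] at this
      exact this
    rcases h4 with h4 | ⟨h4, rfl⟩
    · left; rw [← he']; exact h4
    · right
      refine ⟨by rw [← h4, he'], -(a⁻¹ * b), ?_⟩
      have := Ideal.mul_mem_left _ (C a⁻¹) hmem
      rw [mul_add, ← mul_assoc, ← C_mul, inv_mul_cancel₀ ha, C_1, one_mul, ← mul_assoc,
        ← C_mul] at this
      rw [C_neg, neg_mul, sub_neg_eq_add]
      exact this
  have hHm : mkQ W (hess W) ∈ gradedPiece W q (topDegree q) := ⟨hess W, hH, rfl⟩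
  refine ⟨⟨fun h => hHI ((hmk _).1 h), hHm⟩, ?_, ?_⟩
  · apply le_antisymm
    · rintro _ ⟨p, hp, rfl⟩
      change mkQ W p ∈ _
      by_cases hpI : p ∈ jacobianIdeal W
      · rw [(hmk p).2 hpI]
        exact Submodule.zero_mem _
      · rcases key p _ hp hpI with h | ⟨-, c, h⟩
        · exact absurd h (lt_irrefl _)
        · rw [Submodule.mem_span_singleton]
          refine ⟨c, ?_⟩
          have := (hmk _).2 h
          rw [map_sub, sub_eq_zero] at this
          rw [this, ← map_smul, smul_eq_C_mul]
    · rw [Submodule.span_singleton_le_iff_mem]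
      exact hHm
  · intro d hd'
    rw [eq_bot_iff]
    rintro _ ⟨p, hp, rfl⟩
    change mkQ W p = 0
    rw [hmk]
    by_contra hpI
    rcases key p _ hp hpI with h | ⟨h, -⟩ <;> linarith
end
end

section
/- Let W ∈ ℂ[x₁,…,xₙ] be nondegenerate and quasihomogeneous with weights (q₁,…,qₙ), 0 < qᵢ < 1, and let μ = dim_ℂ Q_W. Define ⟨a,b⟩ ∈ ℂ for a,b ∈ Q_W by requiring that the homogeneous component of a·b of weighted degree Σᵢ(1 − 2qᵢ) equals (⟨a,b⟩/μ)·[Hess(W)]. Then ⟨·,·⟩ is a well-defined symmetric ℂ-bilinear form on Q_W, it is nondegenerate (for every nonzero a ∈ Q_W there exists b ∈ Q_W with ⟨a,b⟩ ≠ 0), and it satisfies the Frobenius property ⟨a·b, c⟩ = ⟨a, b·c⟩ for all a,b,c ∈ Q_W. -/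
open MvPolynomial
open scoped TensorProduct

noncomputable section

open LG

namespace LGP

/-- coefficients with all exponents in `s` at most `N` vanish -/
def Low {σ K : Type*} [CommRing K] (s : Set σ) (N : ℕ) (p : MvPolynomial σ K) : Prop :=
  ∀ m : σ →₀ ℕ, (∀ l ∈ s, m l ≤ N) → coeff m p = 0

variable {σ K : Type*} [CommRing K]

theorem low_sum {ι : Type*} (s : Set σ) (N : ℕ) (t : Finset ι) (f : ι → MvPolynomial σ K)
    (h : ∀ i ∈ t, Low s N (f i)) : Low s N (∑ i ∈ t, f i) := by
  intro m hm
  rw [coeff_sum]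
  exact Finset.sum_eq_zero fun i hi => h i hi m hm

theorem low_X_pow_mul (s : Set σ) (N : ℕ) (l : σ) (hl : l ∈ s) (p : MvPolynomial σ K) :
    Low s N (p * X l ^ (N + 1)) := by
  intro m hm
  rw [X_pow_eq_monomial, coeff_mul_monomial', if_neg]
  intro h
  have h1 := h l
  have h2 := hm l hl
  simp at h1
  omega

theorem low_nzd (s : Set σ) (N : ℕ) (i : σ) (hi : i ∉ s) (y : K) (p : MvPolynomial σ K)
    (h : Low s N (p * (X i - C y))) : Low s N p := by
  classical
  have key : ∀ m : σ →₀ ℕ, (∀ l ∈ s, m l ≤ N) →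
      coeff m p = y * coeff (m + Finsupp.single i 1) p := by
    intro m hm
    have := h (m + Finsupp.single i 1) (by
      intro l hl
      have : i ≠ l := fun e => hi (e ▸ hl)
      simpa [Finsupp.single_apply, this] using hm l hl)
    rw [mul_sub, coeff_sub, coeff_mul_X, mul_comm p (C y), coeff_C_mul, sub_eq_zero] at this
    exact this
  have key2 : ∀ k : ℕ, ∀ m : σ →₀ ℕ, (∀ l ∈ s, m l ≤ N) →
      coeff m p = y ^ k * coeff (m + Finsupp.single i k) p := by
    intro k
    induction k with
    | zero => intro m _; simp
    | succ k ih =>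
      intro m hm
      rw [ih m hm, key (m + Finsupp.single i k), add_assoc, ← Finsupp.single_add, pow_succ]
      · ring
      · intro l hl
        have : i ≠ l := fun e => hi (e ▸ hl)
        simpa [Finsupp.single_apply, this] using hm l hl
  intro m hm
  rw [key2 (p.totalDegree + 1) m hm, coeff_eq_zero_of_totalDegree_lt, mul_zero]
  have : (m + Finsupp.single i (p.totalDegree + 1)) i ≤
      ∑ j ∈ (m + Finsupp.single i (p.totalDegree + 1)).support,
        (m + Finsupp.single i (p.totalDegree + 1)) j := by
    apply Finset.single_le_sum (f := fun j => (m + Finsupp.single i (p.totalDegree + 1)) j)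
    · intros; exact Nat.zero_le _
    · simp
  simp only [Finsupp.add_apply, Finsupp.single_eq_same] at this
  simp only [Finsupp.add_apply]
  omega

variable [Fintype σ] [DecidableEq σ]

/-- the exponent `(N,…,N)` -/
def cst (σ : Type*) [Fintype σ] (N : ℕ) : σ →₀ ℕ := Finsupp.equivFunOnFinite.symm fun _ => N

theorem det_mul_z {R : Type*} [CommRing R] (M : Matrix σ σ R) (z g : σ → R)
    (h : ∀ i, ∑ j, M i j * z j = g i) (i : σ) :
    M.det * z i = ∑ l, M.adjugate i l * g l := by
  have h1 : M.mulVec z = g := by ext i; exact h i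
  have h2 := congrFun (congrArg (fun A => A.mulVec z) M.adjugate_mul) i
  simp only [← Matrix.mulVec_mulVec, h1, Matrix.smul_mulVec, Matrix.one_mulVec] at h2
  simpa [Matrix.mulVec, dotProduct] using h2.symm

theorem det_row (N : ℕ) (y : σ → K) (E : Matrix σ σ (MvPolynomial σ K)) (i : σ)
    (hi : ∑ j, E i j * (X j - C (y j)) = 0)
    (hE : ∀ l, l ≠ i → ∑ j, E l j * (X j - C (y j)) = X l ^ (N + 1)) :
    coeff (cst σ N) E.det = 0 := by
  have h := det_mul_z E (fun j => X j - C (y j)) (fun l => if l = i then 0 else X l ^ (N+1))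
    (by intro l; by_cases e : l = i
        · subst e; simpa using hi
        · simpa [e] using hE l e) i
  have h2 : Low {l | l ≠ i} N (E.det * (X i - C (y i))) := by
    rw [h]
    apply low_sum
    intro l _
    by_cases e : l = i
    · intro m _; simp [e]
    · simp only [e, if_false]
      exact low_X_pow_mul _ _ _ (by simpa using e) _
  exact low_nzd _ _ i (by simp) _ _ h2 _ (by intro l _; simp [cst])

theorem coeff_det_eq (N : ℕ) (y : σ → K) (M D : Matrix σ σ (MvPolynomial σ K))
    (hM : ∀ l, ∑ j, M l j * (X j - C (y j)) = X l ^ (N + 1))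
    (hD : ∀ l, ∑ j, D l j * (X j - C (y j)) = X l ^ (N + 1)) :
    coeff (cst σ N) M.det = coeff (cst σ N) D.det := by
  have key : ∀ s : Finset σ, coeff (cst σ N)
      (Matrix.det (Matrix.of fun i j => if i ∈ s then M i j else D i j)) =
        coeff (cst σ N) D.det := by
    intro s
    induction s using Finset.induction_on with
    | empty =>
      have : (Matrix.of fun i j => if i ∈ (∅ : Finset σ) then M i j else D i j) = D := by
        ext i j : 2; simp
      rw [this]
    | insert a s ha ih =>
      set P : Matrix σ σ (MvPolynomial σ K) :=
        Matrix.of fun i j => if i ∈ s then M i j else D i j with hP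
      have e1 : (Matrix.of fun i j => if i ∈ insert a s then M i j else D i j) =
          P.updateRow a (D a + (M a - D a)) := by
        ext i j : 2
        by_cases h : i = a
        · subst h; simp
        · simp [h, hP]
      have e2 : P.updateRow a (D a) = P := by
        ext i j : 2
        by_cases h : i = a
        · subst h; simp [hP, ha]
        · simp [h]
      have e3 : coeff (cst σ N) (P.updateRow a (M a - D a)).det = 0 := ?_
      · rw [e1, Matrix.det_updateRow_add, e2, coeff_add, ih, e3, add_zero]
      apply det_row N y _ a
      · simp [sub_mul, Finset.sum_sub_distrib, hM, hD]
      · intro l hl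
        by_cases h : l ∈ s
        · simpa [hl, hP, h] using hM l
        · simpa [hl, hP, h] using hD l
  have := key Finset.univ
  have e : (Matrix.of fun i j => if i ∈ (Finset.univ : Finset σ) then M i j else D i j) = M := by
    ext i j : 2; simp
  rwa [e] at this

theorem coeff_det_diag (N : ℕ) (y : σ → K) :
    coeff (cst σ N) (Matrix.det (Matrix.diagonal fun i : σ =>
      ∑ k ∈ Finset.range (N+1), (X i : MvPolynomial σ K) ^ k * C (y i) ^ (N - k))) = 1 := by
  rw [Matrix.det_diagonal, Finset.prod_univ_sum, coeff_sum]
  have e : ∀ p : σ → ℕ, ∏ i, ((X i : MvPolynomial σ K) ^ p i * C (y i) ^ (N - p i)) =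
      monomial (Finsupp.equivFunOnFinite.symm p) (∏ i, y i ^ (N - p i)) := by
    intro p
    rw [Finset.prod_mul_distrib, monomial_eq, mul_comm]
    congr 1
    · simp [map_prod]
    · rw [Finsupp.prod_fintype _ _ (by simp)]; simp
  simp only [e, coeff_monomial]
  rw [Finset.sum_eq_single (fun _ => N)]
  · simp [cst]
  · intro p _ hp
    rw [if_neg]
    intro h
    exact hp (Finsupp.equivFunOnFinite.symm.injective h)
  · intro h
    simp at h

theorem coeff_det_one (N : ℕ) (y : σ → K) (hy : ∀ i, y i ^ (N+1) = 0)
    (M : Matrix σ σ (MvPolynomial σ K))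
    (hM : ∀ l, ∑ j, M l j * (X j - C (y j)) = X l ^ (N + 1)) :
    coeff (cst σ N) M.det = 1 := by
  rw [coeff_det_eq N y M _ hM, coeff_det_diag N y]
  intro l
  rw [Finset.sum_eq_single l]
  · rw [Matrix.diagonal_apply_eq]
    have := (Commute.all (X l : MvPolynomial σ K) (C (y l))).geom_sum₂_mul (N+1)
    simp only [Nat.add_sub_cancel] at this
    rw [this, ← map_pow, hy]; simp
  · intro j _ hj
    rw [Matrix.diagonal_apply_ne _ hj.symm, zero_mul]
  · simp

/-- difference quotients -/
theorem exists_diff (y : σ → K) (p : MvPolynomial σ K) :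
    ∃ d : σ → MvPolynomial σ K, ∑ j, d j * (X j - C (y j)) = p - C (eval y p) := by
  induction p using MvPolynomial.induction_on with
  | C a => exact ⟨0, by simp⟩
  | add p q hp hq =>
    obtain ⟨d, hd⟩ := hp
    obtain ⟨e, he⟩ := hq
    refine ⟨d + e, ?_⟩
    simp only [Pi.add_apply, add_mul, Finset.sum_add_distrib, hd, he, map_add]
    ring
  | mul_X p i hp =>
    obtain ⟨d, hd⟩ := hp
    refine ⟨fun j => d j * X i + if j = i then C (eval y p) else 0, ?_⟩
    have : ∀ j, (d j * X i + if j = i then C (eval y p) else 0) * (X j - C (y j)) =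
      (d j * (X j - C (y j))) * X i + if j = i then C (eval y p) * (X j - C (y j)) else 0 := by
      intro j; split_ifs <;> ring
    simp only [this, Finset.sum_add_distrib, ← Finset.sum_mul, hd]
    simp
    ring

theorem eval_diff (y : σ → K) (p : MvPolynomial σ K) (d : σ → MvPolynomial σ K)
    (h : ∑ j, d j * (X j - C (y j)) = p - C (eval y p)) (j : σ) :
    eval y (d j) = eval y (pderiv j p) := by
  have := congrArg (fun r => eval y (pderiv j r)) h
  simp [pderiv_X, Pi.single_apply, apply_ite (eval y)] at this
  exact this

end LGP
namespace LGP

variable {n : ℕ}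

theorem comp_mul (w : Fin n → ℚ) (d e : ℚ) (a f : MvPolynomial (Fin n) ℂ)
    (hf : IsWeightedHomogeneous w f e) :
    weightedHomogeneousComponent w (d + e) (a * f) =
      weightedHomogeneousComponent w d a * f := by
  classical
  have ha := sum_weightedHomogeneousComponent w a
  rw [finsum_eq_sum _ (weightedHomogeneousComponent_finsupp a)] at ha
  set s := (weightedHomogeneousComponent_finsupp (w := w) a).toFinset
  have e1 : ∀ m, weightedHomogeneousComponent w (d + e) (weightedHomogeneousComponent w m a * f)
      = if m = d then weightedHomogeneousComponent w m a * f else 0 := by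
    intro m
    have hm := (weightedHomogeneousComponent_isWeightedHomogeneous (w := w) m a).mul hf
    split_ifs with h
    · subst h; exact hm.weightedHomogeneousComponent_same
    · exact hm.weightedHomogeneousComponent_ne _ (fun h' => h (add_right_cancel h').symm)
  conv_lhs => rw [← ha, Finset.sum_mul, map_sum]
  simp only [e1]
  rw [Finset.sum_ite_eq' s d]
  split_ifs with h
  · rfl
  · have : weightedHomogeneousComponent w d a = 0 := by
      by_contra h'
      exact h ((weightedHomogeneousComponent_finsupp (w := w) a).mem_toFinset.2 h')
    rw [this, zero_mul]

theorem isWH (W : MvPolynomial (Fin n) ℂ) (q : Fin n → ℚ) (hqh : IsQuasiHomogeneous W q) :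
    IsWeightedHomogeneous q W 1 := by
  intro d hd
  have := hqh.2 d (by simpa [mem_support_iff] using hd)
  rw [Finsupp.weight_apply, Finsupp.sum_fintype _ _ (by simp), ← this]
  simp

theorem exists_pow (W : MvPolynomial (Fin n) ℂ) (hnd : Nondegenerate W) :
    ∃ N : ℕ, ∀ i, (X i : MvPolynomial (Fin n) ℂ) ^ (N + 1) ∈ jacobianIdeal W := by
  have h : ∀ i, ∃ k : ℕ, (X i : MvPolynomial (Fin n) ℂ) ^ k ∈ jacobianIdeal W := by
    intro i
    have : (X i : MvPolynomial (Fin n) ℂ) ∈ (jacobianIdeal W).radical := by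
      rw [← vanishingIdeal_zeroLocus_eq_radical (K := ℂ), mem_vanishingIdeal_iff]
      intro x hx
      have hx0 : x = 0 := by
        apply hnd
        intro j
        have := hx (pderiv j W) (Ideal.subset_span ⟨j, rfl⟩)
        simpa [aeval_eq_eval] using this
      simp [hx0]
    exact this
  choose k hk using h
  refine ⟨∑ i, k i, fun i => ?_⟩
  have : k i ≤ (∑ i, k i) + 1 :=
    (Finset.single_le_sum (fun _ _ => Nat.zero_le _) (Finset.mem_univ i)).trans (Nat.le_succ _)
  exact Ideal.pow_mem_of_pow_mem _ (hk i) this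

theorem exists_A (W : MvPolynomial (Fin n) ℂ) (q : Fin n → ℚ)
    (hnd : Nondegenerate W) (hqh : IsQuasiHomogeneous W q) :
    ∃ (N : ℕ) (A : Matrix (Fin n) (Fin n) (MvPolynomial (Fin n) ℂ)),
      (∀ i, ∑ j, A i j * pderiv j W = X i ^ (N + 1)) ∧
      ∀ i j, IsWeightedHomogeneous q (A i j) ((N + 1) * q i - (1 - q j)) := by
  obtain ⟨N, hN⟩ := exists_pow W hnd
  have h : ∀ i, ∃ c : Fin n → MvPolynomial (Fin n) ℂ,
      ∑ j, c j * pderiv j W = X i ^ (N + 1) := by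
    intro i
    have := hN i
    rw [jacobianIdeal, Ideal.mem_span_range_iff_exists_fun] at this
    exact this
  choose c hc using h
  refine ⟨N, Matrix.of fun i j => weightedHomogeneousComponent q ((N + 1) * q i - (1 - q j)) (c i j),
    ?_, ?_⟩
  · intro i
    have hX : IsWeightedHomogeneous q ((X i : MvPolynomial (Fin n) ℂ) ^ (N + 1)) ((N + 1) * q i) := by
      have := (isWeightedHomogeneous_X ℂ q i).pow (N + 1)
      simpa using this
    rw [← hX.weightedHomogeneousComponent_same, ← hc i, map_sum]
    refine Finset.sum_congr rfl fun j _ => ?_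
    have hf : IsWeightedHomogeneous q (pderiv j W) (1 - q j) :=
      (isWH W q hqh).pderiv (by ring)
    rw [Matrix.of_apply, ← comp_mul _ _ _ _ _ hf]
    congr 2
    ring
  · intro i j
    exact weightedHomogeneousComponent_isWeightedHomogeneous _ _

theorem det_hom (q : Fin n → ℚ) (N : ℕ) (A : Matrix (Fin n) (Fin n) (MvPolynomial (Fin n) ℂ))
    (hA : ∀ i j, IsWeightedHomogeneous q (A i j) ((N + 1) * q i - (1 - q j))) :
    IsWeightedHomogeneous q A.det (∑ i, ((N + 1) * q i - (1 - q i))) := by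
  rw [Matrix.det_apply]
  apply IsWeightedHomogeneous.sum
  intro s _
  have h1 : IsWeightedHomogeneous q (∏ i, A (s i) i) (∑ i, ((N + 1) * q i - (1 - q i))) := by
    have := IsWeightedHomogeneous.prod (w := q) Finset.univ (fun i => A (s i) i)
      (fun i => (N + 1) * q (s i) - (1 - q i)) (fun i _ => hA _ _)
    convert this using 1
    rw [Finset.sum_sub_distrib (fun i => ((N:ℚ) + 1) * q i), Finset.sum_sub_distrib (fun i => ((N:ℚ) + 1) * q (s i))]
    congr 1
    exact (Equiv.sum_comp s fun i => (N + 1 : ℚ) * q i).symm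
  rcases Int.units_eq_one_or (Equiv.Perm.sign s) with h | h
  · simpa [h] using h1
  · simpa [h] using h1.neg

theorem trace_abs {V ι : Type*} [CommRing V] [Algebra ℂ V] [Module.Finite ℂ V]
    (L : V →ₗ[ℂ] ℂ) (s : Finset ι) (e u : ι → V)
    (h : ∀ a, a = ∑ m ∈ s, L (a * e m) • u m) :
    L (∑ m ∈ s, e m * u m) = Module.finrank ℂ V := by
  rw [← LinearMap.trace_id ℂ V]
  have : (LinearMap.id : V →ₗ[ℂ] V) =
      ∑ m ∈ s, ((L ∘ₗ LinearMap.mulRight ℂ (e m)).smulRight (u m)) := by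
    ext1 a
    conv_lhs => rw [LinearMap.id_apply, h a]
    simp
  rw [this, map_sum, map_sum]
  refine Finset.sum_congr rfl fun m _ => ?_
  rw [LinearMap.trace_smulRight]
  simp [mul_comm]

theorem exists_residue (W : MvPolynomial (Fin n) ℂ) (q : Fin n → ℚ)
    (hnd : Nondegenerate W) (hqh : IsQuasiHomogeneous W q) :
    ∃ (L : MilnorRing W →ₗ[ℂ] ℂ) (F : MvPolynomial (Fin n) (MilnorRing W)),
      (∀ a, a = ∑ m ∈ F.support, L (a * mkQ W (monomial m 1)) • coeff m F) ∧
      (mkQ W (hess W) = ∑ m ∈ F.support, mkQ W (monomial m 1) * coeff m F) ∧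
      (∀ h d, IsWeightedHomogeneous q h d → d ≠ topDegree q → L (mkQ W h) = 0) := by
  obtain ⟨N, A, hA, hAh⟩ := exists_A W q hnd hqh
  let ι : MvPolynomial (Fin n) ℂ →+* MvPolynomial (Fin n) (MilnorRing W) := MvPolynomial.map (algebraMap ℂ (MilnorRing W))
  let y : Fin n → MilnorRing W := fun i => mkQ W (X i)
  have hev : ∀ p, eval y (ι p) = mkQ W p := by
    intro p
    rw [eval_map]
    have : (mkQ W) p = aeval y p := by
      conv_lhs => rw [aeval_unique (mkQ W)]
      rfl
    rw [this, aeval_def]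
  have hmk : ∀ p ∈ jacobianIdeal W, mkQ W p = 0 := fun p hp => Ideal.Quotient.eq_zero_iff_mem.2 hp
  have hf0 : ∀ i, mkQ W (pderiv i W) = 0 := fun i => hmk _ (Ideal.subset_span ⟨i, rfl⟩)
  have hy : ∀ i, y i ^ (N + 1) = 0 := by
    intro i
    rw [← map_pow, ← hA i, map_sum]
    exact Finset.sum_eq_zero fun j _ => by rw [map_mul, hf0, mul_zero]
  choose Δ hΔ using fun i => exists_diff y (ι (pderiv i W))
  let D : Matrix (Fin n) (Fin n) (MvPolynomial (Fin n) (MilnorRing W)) := Matrix.of Δ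
  have hD : ∀ i, ∑ j, D i j * (X j - C (y j)) = ι (pderiv i W) := by
    intro i
    have := hΔ i
    rw [hev, hf0, map_zero, sub_zero] at this
    exact this
  -- the functional
  have hdetA : ∀ j, A.det * pderiv j W = ∑ l, A.adjugate j l * X l ^ (N + 1) :=
    det_mul_z A _ _ hA
  let ρ : MvPolynomial (Fin n) ℂ →ₗ[ℂ] ℂ :=
    (lcoeff ℂ (cst (Fin n) N)) ∘ₗ (LinearMap.mulRight ℂ A.det)
  have hρ : ∀ p, ρ p = coeff (cst (Fin n) N) (p * A.det) := fun p => rfl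
  have hcst : ∀ l ∈ (Set.univ : Set (Fin n)), cst (Fin n) N l ≤ N := by
    intro l _; simp [cst]
  have hρJ : (jacobianIdeal W).restrictScalars ℂ ≤ LinearMap.ker ρ := by
    intro p hp
    rw [Submodule.restrictScalars_mem, jacobianIdeal, Ideal.mem_span_range_iff_exists_fun] at hp
    obtain ⟨c, rfl⟩ := hp
    rw [LinearMap.mem_ker, hρ, Finset.sum_mul]
    refine low_sum Set.univ N _ _ ?_ _ hcst
    intro j _
    rw [mul_assoc, mul_comm (pderiv j W), hdetA, Finset.mul_sum]
    refine low_sum Set.univ N _ _ ?_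
    intro l _
    rw [← mul_assoc]
    exact low_X_pow_mul _ _ _ (Set.mem_univ _) _
  let L : MilnorRing W →ₗ[ℂ] ℂ := ((jacobianIdeal W).restrictScalars ℂ).liftQ ρ hρJ
  have hL : ∀ p, L (mkQ W p) = ρ p := fun p => rfl
  have hsurj : Function.Surjective (mkQ W) := Ideal.Quotient.mk_surjective
  refine ⟨L, D.det, ?_, ?_, ?_⟩
  · intro a
    obtain ⟨h, rfl⟩ := hsurj a
    -- r(p) = coeff (p * ι det A)
    have hone : coeff (cst (Fin n) N) ((A.map ι * D).det) = 1 := by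
      apply coeff_det_one N y hy
      intro l
      simp only [Matrix.mul_apply, Finset.sum_mul]
      rw [Finset.sum_comm]
      simp only [mul_assoc, ← Finset.mul_sum, hD, Matrix.map_apply]
      simp only [← map_mul, ← map_sum, hA]
      simp [ι]
    rw [Matrix.det_mul, ← RingHom.mapMatrix_apply, ← RingHom.map_det] at hone
    have hz : ∀ j, ∀ p, coeff (cst (Fin n) N) (p * (X j - C (y j)) * (ι A.det * D.det)) = 0 := by
      intro j p
      have e : p * (X j - C (y j)) * (ι A.det * D.det) =
          ∑ l, ∑ k, (p * D.adjugate j l * ι (A.adjugate l k)) * X k ^ (N + 1) := by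
        have e1 := det_mul_z D _ _ hD j
        have e2 : ∀ l, ι A.det * ι (pderiv l W) = ∑ k, ι (A.adjugate l k) * X k ^ (N + 1) := by
          intro l
          rw [← map_mul, hdetA]
          simp [ι]
        calc _ = p * ι A.det * (D.det * (X j - C (y j))) := by ring
          _ = ∑ l, p * D.adjugate j l * (ι A.det * ι (pderiv l W)) := by
            rw [e1, Finset.mul_sum]
            exact Finset.sum_congr rfl fun l _ => by ring
          _ = _ := by
            refine Finset.sum_congr rfl fun l _ => ?_
            rw [e2, Finset.mul_sum]
            exact Finset.sum_congr rfl fun k _ => by ring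
      rw [e]
      refine low_sum Set.univ N _ _ ?_ _ hcst
      intro l _
      refine low_sum Set.univ N _ _ ?_
      intro k _
      exact low_X_pow_mul _ _ _ (Set.mem_univ _) _
    have hmain : coeff (cst (Fin n) N) (ι h * (ι A.det * D.det)) = mkQ W h := by
      obtain ⟨d, hd⟩ := exists_diff y (ι h)
      rw [hev] at hd
      have : ι h = C (mkQ W h) + ∑ j, d j * (X j - C (y j)) := by rw [hd]; ring
      rw [this, add_mul, coeff_add, coeff_C_mul, hone, Finset.sum_mul, coeff_sum,
        Finset.sum_eq_zero (fun j _ => hz j (d j))]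
      simp
    have hdet : D.det = ∑ m ∈ D.det.support, C (coeff m D.det) * ι (monomial m 1) := by
      conv_lhs => rw [as_sum D.det]
      refine Finset.sum_congr rfl fun m _ => ?_
      simp [ι, C_mul_monomial]
    conv_lhs => rw [← hmain, hdet, Finset.mul_sum, Finset.mul_sum, coeff_sum]
    refine Finset.sum_congr rfl fun m _ => ?_
    have : ι h * (ι A.det * (C (coeff m D.det) * ι (monomial m 1))) =
        C (coeff m D.det) * ι (h * monomial m 1 * A.det) := by
      rw [map_mul, map_mul]; ring
    rw [this, coeff_C_mul, ← map_mul, hL, hρ, coeff_map]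
    exact (mul_comm _ _).trans (Algebra.smul_def _ _).symm
  · have e : eval y D.det = mkQ W (hess W) := by
      refine (RingHom.map_det (eval y) D).trans ?_
      refine Eq.trans ?_ (AlgHom.map_det (mkQ W) _).symm
      rw [← Matrix.det_transpose]
      congr 1
      ext i j
      simp only [RingHom.mapMatrix_apply, Matrix.map_apply, Matrix.transpose_apply,
        AlgHom.mapMatrix_apply, Matrix.of_apply, D]
      rw [eval_diff y _ _ (hΔ j) i, ← hev, pderiv_map]
    rw [← e, eval_eq]
    refine Finset.sum_congr rfl fun m _ => ?_
    rw [mul_comm, monomial_eq, Finsupp.prod_fintype _ _ (by simp)]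
    simp [y, Finset.prod_subset (Finset.subset_univ m.support)
      (f := fun i => (mkQ W) (X i) ^ m i) (by intro i _ hi; simp at hi; simp [hi])]
  · intro h d hh hd
    rw [hL, hρ]
    apply (hh.mul (det_hom q N A hAh)).coeff_eq_zero
    intro e
    apply hd
    rw [Finsupp.weight_apply, Finsupp.sum_fintype _ _ (by simp)] at e
    simp only [cst, Finsupp.equivFunOnFinite_symm_apply_apply, nsmul_eq_mul] at e
    have : d = ∑ i, (N * q i) - ∑ i, ((N + 1) * q i - (1 - q i)) := by rw [e]; ring
    rw [this, topDegree, ← Finset.sum_sub_distrib]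
    exact Finset.sum_congr rfl fun i _ => by ring

end LGP

theorem milnor_pairing_frobenius {n : ℕ}
    (W : MvPolynomial (Fin n) ℂ) (q : Fin n → ℚ)
    (hq : ∀ i, 0 < q i ∧ q i < 1)
    (hnd : Nondegenerate W) (hqh : IsQuasiHomogeneous W q) :
    ∃ p : MilnorRing W → MilnorRing W → ℂ,
      IsMilnorPairing W q p ∧
      (∀ p', IsMilnorPairing W q p' → p' = p) ∧
      (∀ a b, p a b = p b a) ∧
      (∀ a b c : MilnorRing W, ∀ s t : ℂ,
        p (s • a + t • b) c = s * p a c + t * p b c) ∧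
      (∀ a : MilnorRing W, a ≠ 0 → ∃ b, p a b ≠ 0) ∧
      (∀ a b c : MilnorRing W, p (a * b) c = p a (b * c)) := by
  obtain ⟨L, F, hF, hH, hL⟩ := LGP.exists_residue W q hnd hqh
  have hsurj : Function.Surjective (mkQ W) := Ideal.Quotient.mk_surjective
  have hzero : ∀ a, (∀ m, L (a * mkQ W (monomial m 1)) = 0) → a = 0 := by
    intro a ha
    rw [hF a]
    exact Finset.sum_eq_zero fun m _ => by rw [ha, zero_smul]
  have hfin : Module.Finite ℂ (MilnorRing W) := by
    classical
    refine ⟨⟨F.support.image fun m => coeff m F, ?_⟩⟩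
    rw [eq_top_iff]
    rintro a -
    rw [hF a]
    refine Submodule.sum_mem _ fun m hm => Submodule.smul_mem _ _ (Submodule.subset_span ?_)
    simpa using ⟨m, by simpa using hm, rfl⟩
  have htr : L (mkQ W (hess W)) = Module.finrank ℂ (MilnorRing W) := by
    rw [hH]
    exact LGP.trace_abs L _ _ _ hF
  have hnt : Nontrivial (MilnorRing W) := by
    apply Ideal.Quotient.nontrivial_iff.2
    intro htop
    have hle : jacobianIdeal W ≤ RingHom.ker (eval (0 : Fin n → ℂ)) := by
      rw [jacobianIdeal, Ideal.span_le]
      rintro _ ⟨i, rfl⟩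
      have hf : IsWeightedHomogeneous q (pderiv i W) (1 - q i) :=
        (LGP.isWH W q hqh).pderiv (by ring)
      have := hf.coeff_eq_zero 0 (by
        have := (hq i).2
        simp only [map_zero]
        intro h
        linarith)
      simp only [SetLike.mem_coe, RingHom.mem_ker]
      rw [← constantCoeff_eq] at this
      rw [← this, ← eval_zero]
    rw [htop, top_le_iff] at hle
    exact RingHom.ker_ne_top _ hle
  have hμ : (Module.finrank ℂ (MilnorRing W) : ℂ) ≠ 0 := by
    have := Module.finrank_pos (R := ℂ) (M := MilnorRing W)
    exact_mod_cast this.ne'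
  have hbelow : ∀ c ∈ belowTop W q, L c = 0 := by
    intro c hc
    have : belowTop W q ≤ LinearMap.ker L := by
      refine iSup_le fun d => iSup_le fun hd => ?_
      rintro _ ⟨h, hh, rfl⟩
      exact hL h d hh hd.ne
    exact this hc
  have hwt : ∀ m : Fin n →₀ ℕ, m ≠ 0 → 0 < Finsupp.weight q m := by
    intro m hm
    rw [Finsupp.weight_apply, Finsupp.sum]
    apply Finset.sum_pos
    · intro i hi
      have h1 : 0 < m i := Nat.pos_of_ne_zero (by simpa using hi)
      exact nsmul_pos (hq i).1 h1.ne'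
    · simpa using hm
  have hmem : ∀ c, L c = 0 → c ∈ belowTop W q := by
    intro c hc
    obtain ⟨h, rfl⟩ := hsurj c
    have hs := sum_weightedHomogeneousComponent q h
    rw [finsum_eq_sum _ (weightedHomogeneousComponent_finsupp h)] at hs
    set s := (weightedHomogeneousComponent_finsupp (w := q) h).toFinset
    have htop : L (mkQ W (weightedHomogeneousComponent q (topDegree q) h)) = 0 := by
      by_cases ht : topDegree q ∈ s
      · rw [← hs, map_sum, map_sum, Finset.sum_eq_single_of_mem _ ht] at hc
        · exact hc
        · intro d _ hd
          exact hL _ d (weightedHomogeneousComponent_isWeightedHomogeneous _ _) hd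
      · have : weightedHomogeneousComponent q (topDegree q) h = 0 := by
          by_contra h'
          exact ht ((weightedHomogeneousComponent_finsupp (w := q) h).mem_toFinset.2 h')
        rw [this, map_zero, map_zero]
    rw [← hs, map_sum]
    refine Submodule.sum_mem _ fun d _ => ?_
    have hd := weightedHomogeneousComponent_isWeightedHomogeneous (w := q) d h
    rcases lt_or_ge d (topDegree q) with hlt | hge
    · exact Submodule.mem_iSup_of_mem d (Submodule.mem_iSup_of_mem hlt ⟨_, hd, rfl⟩)
    · rw [hzero (mkQ W (weightedHomogeneousComponent q d h))]
      · exact Submodule.zero_mem _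
      intro m
      rw [← map_mul]
      by_cases hm : m = 0
      · subst hm
        rw [show (monomial (0 : Fin n →₀ ℕ) (1 : ℂ)) = 1 from rfl, mul_one]
        rcases eq_or_lt_of_le hge with he | hlt
        · rw [← he]; exact htop
        · exact hL _ d hd hlt.ne'
      · refine hL _ _ (hd.mul (isWeightedHomogeneous_monomial q m 1 rfl)) ?_
        have := hwt m hm
        have h3 : topDegree q < d + Finsupp.weight q m := by linarith
        exact h3.ne'
  refine ⟨fun a b => L (a * b), ?_, ?_, ?_, ?_, ?_, ?_⟩
  · intro a b
    apply hmem
    rw [map_sub, map_smul, htr, smul_eq_mul, div_mul_cancel₀ _ hμ, sub_self]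
  · intro p' hp'
    funext a b
    have := hbelow _ (hp' a b)
    rw [map_sub, map_smul, htr, smul_eq_mul, div_mul_cancel₀ _ hμ, sub_eq_zero] at this
    exact this.symm
  · intro a b
    simp only [mul_comm]
  · intro a b c s t
    have e1 : (s • a) * c = s • (a * c) := smul_mul_assoc s a c
    have e2 : (t • b) * c = t • (b * c) := smul_mul_assoc t b c
    simp only [add_mul, e1, e2, map_add, map_smul, smul_eq_mul]
  · intro a ha
    by_contra hcon
    push Not at hcon
    exact ha (hzero a fun m => hcon _)
  · intro a b c
    simp only [mul_assoc]
end
end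

section
/- Let W ∈ ℂ[x₁,…,xₙ] be an admissible polynomial; in particular its quasihomogeneous weights are uniquely determined (equivalently, the exponent vectors of the monomials of W span ℚⁿ). Then the group G_W^max = {ζ ∈ (ℂ^×)ⁿ : W(ζ₁x₁,…,ζₙxₙ) = W(x₁,…,xₙ)} of diagonal symmetries of W is a finite group, and every coordinate ζᵢ of every element ζ ∈ G_W^max is a root of unity. -/
open MvPolynomial
open scoped TensorProduct

noncomputable section

open LG

theorem aux_coeff {n : ℕ} (ζ : Fin n → ℂ) (W : MvPolynomial (Fin n) ℂ) (a : Fin n →₀ ℕ) :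
    coeff a (scaleVars ζ W) = (∏ i, ζ i ^ a i) * coeff a W := by
  induction W using MvPolynomial.induction_on' with
  | monomial u c =>
    have : scaleVars ζ (monomial u c) = monomial u ((∏ i, ζ i ^ u i) * c) := by
      rw [scaleVars, aeval_monomial, Finsupp.prod_fintype _ _ (by simp)]
      simp only [mul_pow, Finset.prod_mul_distrib]
      rw [monomial_eq, Finsupp.prod_fintype _ _ (by simp)]
      simp only [C_mul, map_prod, C_pow, algebraMap_eq]
      ring
    rw [this, coeff_monomial, coeff_monomial]
    split_ifs with h
    · rw [h]
    · simp
  | add p r hp hr => rw [map_add, coeff_add, coeff_add, hp, hr, mul_add]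

theorem aux_ker {n : ℕ} (W : MvPolynomial (Fin n) ℂ) (q : Fin n → ℚ)
    (hq : IsQuasiHomogeneous W q) (hu : ∀ q', IsQuasiHomogeneous W q' → q' = q)
    (v : Fin n → ℚ) (hv : ∀ a ∈ W.support, ∑ i, (a i : ℚ) * v i = 0) : v = 0 := by
  have h1 : ∀ i, ∀ᶠ e : ℚ in nhdsWithin 0 (Set.Ioi 0), 0 < q i + e * v i := by
    intro i
    have hc : Filter.Tendsto (fun e : ℚ => q i + e * v i) (nhds 0) (nhds (q i + 0 * v i)) := by
      apply Continuous.tendsto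
      fun_prop
    rw [zero_mul, add_zero] at hc
    exact (hc.eventually (lt_mem_nhds (hq.1 i))).filter_mono nhdsWithin_le_nhds
  obtain ⟨e, he, hpos⟩ := ((Filter.eventually_all.2 h1).and self_mem_nhdsWithin).exists
  have hpos : 0 < e := hpos
  have := hu (fun i => q i + e * v i) ⟨he, fun a ha => by
    have h2 : ∀ i, (a i : ℚ) * (q i + e * v i) = a i * q i + e * (a i * v i) := fun i => by ring
    simp only [h2, Finset.sum_add_distrib, ← Finset.mul_sum, hv a ha, hq.2 a ha]
    simp⟩
  funext i
  have h3 := congrFun this i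
  simp only [add_eq_left, mul_eq_zero, hpos.ne', false_or] at h3
  exact h3

theorem aux_span {n : ℕ} (W : MvPolynomial (Fin n) ℂ) (q : Fin n → ℚ)
    (hq : IsQuasiHomogeneous W q) (hu : ∀ q', IsQuasiHomogeneous W q' → q' = q) :
    Submodule.span ℚ {x : Fin n → ℚ | ∃ a ∈ W.support, x = fun i => (a i : ℚ)} = ⊤ := by
  by_contra hne
  obtain ⟨f, hf, hle⟩ := Submodule.exists_le_ker_of_lt_top _ (lt_top_iff_ne_top.2 hne)
  apply hf
  have hfx : ∀ x : Fin n → ℚ, f x = ∑ i, x i * f (Pi.single i 1) := by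
    intro x
    rw [LinearMap.pi_apply_eq_sum_univ f x]
    refine Finset.sum_congr rfl fun i _ => ?_
    rw [smul_eq_mul]
    congr 2
    funext j
    simp [Pi.single_apply, eq_comm]
  have h0 := aux_ker W q hq hu (fun i => f (Pi.single i 1)) (fun a ha => by
    have := hle (Submodule.subset_span ⟨a, ha, rfl⟩)
    rw [LinearMap.mem_ker, hfx] at this
    exact this)
  ext x
  simpa using congrFun h0 x

theorem aux_pow {n : ℕ} (W : MvPolynomial (Fin n) ℂ) (q : Fin n → ℚ)
    (hq : IsQuasiHomogeneous W q) (hu : ∀ q', IsQuasiHomogeneous W q' → q' = q)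
    (x : Fin n → ℚ) :
    ∃ k : ℕ, 0 < k ∧ ∃ m : Fin n → ℤ, (∀ i, (m i : ℚ) = k * x i) ∧
      ∀ ζ : Fin n → ℂ, (∀ i, ζ i ≠ 0) → scaleVars ζ W = W → ∏ i, ζ i ^ m i = 1 := by
  have hx : x ∈ Submodule.span ℚ {x : Fin n → ℚ | ∃ a ∈ W.support, x = fun i => (a i : ℚ)} := by
    rw [aux_span W q hq hu]; trivial
  induction hx using Submodule.span_induction with
  | mem x h =>
    obtain ⟨a, ha, rfl⟩ := h
    refine ⟨1, one_pos, fun i => a i, by simp, fun ζ _ hζ => ?_⟩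
    have h := aux_coeff ζ W a
    rw [hζ] at h
    have := mul_right_cancel₀ (mem_support_iff.1 ha) ((one_mul _).trans h)
    simpa using this.symm
  | zero => exact ⟨1, one_pos, 0, by simp, by simp⟩
  | add x y _ _ hx hy =>
    obtain ⟨k, hk, m, hm, h⟩ := hx
    obtain ⟨k', hk', m', hm', h'⟩ := hy
    refine ⟨k * k', Nat.mul_pos hk hk', fun i => m i * k' + m' i * k, fun i => ?_,
      fun ζ h0 hζ => ?_⟩
    · push_cast
      rw [hm, hm', Pi.add_apply]; ring
    · simp only [zpow_add₀ (h0 _), zpow_mul, Finset.prod_mul_distrib, Finset.prod_zpow,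
        h ζ h0 hζ, h' ζ h0 hζ, one_zpow, mul_one]
  | smul r x _ hx =>
    obtain ⟨k, hk, m, hm, h⟩ := hx
    refine ⟨k * r.den, Nat.mul_pos hk r.den_pos, fun i => m i * r.num, fun i => ?_,
      fun ζ h0 hζ => ?_⟩
    · push_cast
      rw [hm, Pi.smul_apply, smul_eq_mul]
      linear_combination (-(k : ℚ) * x i) * Rat.den_mul_eq_num r
    · simp only [zpow_mul, Finset.prod_zpow, h ζ h0 hζ, one_zpow]

/-- the group of diagonal symmetries of an admissible polynomial
is finite, and every coordinate of every diagonal symmetry is a root of unity. -/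
theorem maximal_symmetry_group_finite {n : ℕ}
    (W : MvPolynomial (Fin n) ℂ) (q : Fin n → ℚ)
    (hW : Admissible W q) :
    {ζ : Fin n → ℂ | (∀ i, ζ i ≠ 0) ∧ scaleVars ζ W = W}.Finite ∧
    ∀ ζ : Fin n → ℂ, (∀ i, ζ i ≠ 0) → scaleVars ζ W = W →
      ∀ i, ∃ k : ℕ, 0 < k ∧ ζ i ^ k = 1 := by
  have key : ∀ i : Fin n, ∃ k : ℕ, 0 < k ∧ ∀ ζ : Fin n → ℂ, (∀ i, ζ i ≠ 0) →
      scaleVars ζ W = W → ζ i ^ k = 1 := by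
    intro i
    obtain ⟨k, hk, m, hm, h⟩ := aux_pow W q hW.2.1 hW.2.2.1 (Pi.single i 1)
    refine ⟨k, hk, fun ζ h0 hζ => ?_⟩
    have h1 := h ζ h0 hζ
    rw [Finset.prod_eq_single i] at h1
    · have h2 : m i = k := by
        have := hm i
        rw [Pi.single_eq_same, mul_one] at this
        exact_mod_cast this
      rw [h2] at h1
      exact_mod_cast h1
    · intro j _ hj
      have h2 : m j = 0 := by
        have := hm j
        rw [Pi.single_eq_of_ne hj, mul_zero] at this
        exact_mod_cast this
      rw [h2, zpow_zero]
    · simp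
  choose k hk h using key
  refine ⟨?_, fun ζ h0 hζ i => ⟨k i, hk i, h i ζ h0 hζ⟩⟩
  have hfin : ∀ i, {z : ℂ | z ^ k i = 1}.Finite := fun i => by
    refine (Polynomial.nthRootsFinset (k i) (1 : ℂ)).finite_toSet.subset fun z hz => ?_
    exact (Polynomial.mem_nthRootsFinset (hk i) _).2 hz
  refine (Set.Finite.pi' hfin).subset ?_
  rintro ζ ⟨h0, hζ⟩ i
  exact h i ζ h0 hζ
end
end

section
/- (Webb's Theorem.) Let W₁, W₂ ∈ ℂ[x₁,…,xₙ] be nondegenerate quasihomogeneous polynomials with the same ordered weights (q₁,…,qₙ), all in (0,1). If the homogeneous component of the Milnor ring Q_{W₁} of weighted degree 1 is zero (no nonzero element of Q_{W₁} has weighted degree 1), then Q_{W₁} and Q_{W₂} are isomorphic as ℂ-algebras (equivalently, W₁ and W₂ are equivalent singularities). -/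
open MvPolynomial
open scoped TensorProduct

noncomputable section

open LG

namespace WebbAux
open RingTheory.Sequence IsLocalRing CategoryTheory Abelian

lemma avoid {R : Type} [CommRing R] [Algebra ℂ R] (f : R) (fs : List R)
    (P : Set (Ideal R)) (hP : P.Finite) (h : ∀ p ∈ P, ¬ Ideal.ofList (f :: fs) ≤ p) :
    ∃ c : ℂ, c ≠ 0 ∧ ∃ r ∈ Ideal.ofList fs, ∀ p ∈ P, c • f + r ∉ p := by
  have := hP.to_subtype
  let S := Submodule.span ℂ {x | x ∈ fs}
  let φ : (ℂ × S) →ₗ[ℂ] R := (LinearMap.toSpanSingleton ℂ R f).coprod S.subtype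
  let V : Option P → Submodule ℂ (ℂ × S) := fun o => o.elim (LinearMap.ker (LinearMap.fst ℂ ℂ S))
    (fun p => (p.1.restrictScalars ℂ).comap φ)
  by_contra hcon
  push Not at hcon
  have hle : S ≤ (Ideal.ofList fs).restrictScalars ℂ := by
    rw [Submodule.span_le]
    intro x hx
    exact Ideal.subset_span hx
  have hcov : ⋃ i, (V i : Set (ℂ × S)) = Set.univ := by
    rw [Set.eq_univ_iff_forall]
    rintro ⟨c, r⟩
    rw [Set.mem_iUnion]
    by_cases hc : c = 0
    · exact ⟨none, by simp [V, hc]⟩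
    · obtain ⟨p, hp, hm⟩ := hcon c hc r.1 (hle r.2)
      exact ⟨some ⟨p, hp⟩, by simpa [V, φ] using hm⟩
  obtain ⟨i, hi⟩ := Subspace.exists_eq_top_of_iUnion_eq_univ hcov
  cases i with
  | none =>
    have : ((1 : ℂ), (0 : S)) ∈ V none := by rw [hi]; trivial
    simp [V] at this
  | some p =>
    apply h p.1 p.2
    refine Ideal.span_le.mpr ?_
    intro x hx
    rcases List.mem_cons.mp hx with rfl | hx
    · have : ((1 : ℂ), (0 : S)) ∈ V (some p) := by rw [hi]; trivial
      simpa [V, φ] using this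
    · have : ((0 : ℂ), (⟨x, Submodule.subset_span hx⟩ : S)) ∈ V (some p) := by rw [hi]; trivial
      simpa [V, φ] using this

lemma wr_of_ext {R : Type} [CommRing R] [IsLocalRing R] [IsNoetherianRing R] [Algebra ℂ R]
    (I : Ideal R) (fs : List R) (M : Type) [AddCommGroup M] [Module R M] [Module.Finite R M]
    (hI : I ≤ Ideal.ofList fs ⊔ Module.annihilator R M)
    (hm : ∀ r ∈ fs, r ∈ maximalIdeal R)
    (hext : ∀ i < fs.length, Subsingleton (Ext (ModuleCat.of R (R ⧸ I)) (ModuleCat.of R M) i)) :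
    IsWeaklyRegular M fs := by
  induction fs generalizing M with
  | nil => exact IsWeaklyRegular.nil R M
  | cons f fs ih =>
    have : Subsingleton (ModuleCat.of R (R ⧸ I) ⟶ ModuleCat.of R M) :=
      Ext.addEquiv₀.subsingleton_congr.mp (hext 0 (by simp))
    have : Subsingleton ((R ⧸ I) →ₗ[R] M) :=
      (ModuleCat.homAddEquiv (M := ModuleCat.of R (R ⧸ I)) (N := ModuleCat.of R M)).symm.subsingleton
    obtain ⟨x, mem_ann, hx⟩ := IsSMulRegular.subsingleton_linearMap_iff.mp this
    rw [Ideal.annihilator_quotient] at mem_ann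
    obtain ⟨c, hc, r, hr, hcr⟩ := avoid f fs (associatedPrimes R M) (associatedPrimes.finite R M) (by
      intro p hp hle
      have h1 : Module.annihilator R M ≤ p := by
        have := IsAssociatedPrime.annihilator_le hp
        rwa [Submodule.annihilator_top] at this
      have h2 : x ∈ p := (hI.trans (sup_le hle h1)) mem_ann
      have h3 : x ∈ ⋃ p ∈ associatedPrimes R M, (p : Set R) := Set.mem_biUnion hp h2
      rw [biUnion_associatedPrimes_eq_compl_regular] at h3
      exact h3 hx)
    set g := c • f + r with hg
    have hgreg : IsSMulRegular M g := by
      by_contra hn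
      have h3 : g ∈ ⋃ p ∈ associatedPrimes R M, (p : Set R) := by
        rw [biUnion_associatedPrimes_eq_compl_regular]; exact hn
      obtain ⟨p, hp, h4⟩ := Set.mem_iUnion₂.mp h3
      exact hcr p hp h4
    have hf : f = c⁻¹ • (g - r) := by
      rw [hg, add_sub_cancel_right, smul_smul, inv_mul_cancel₀ hc, one_smul]
    have hrm : r ∈ maximalIdeal R := by
      refine (Ideal.span_le.mpr ?_ : Ideal.ofList fs ≤ _) hr
      intro y hy
      exact hm y (List.mem_cons_of_mem _ hy)
    have hgm : g ∈ maximalIdeal R := by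
      rw [hg, Algebra.smul_def]
      exact Ideal.add_mem _ (Ideal.mul_mem_left _ _ (hm f (by simp))) hrm
    have key : IsWeaklyRegular (QuotSMulTop g M) fs := by
      apply ih
      · have hgann : g ∈ Module.annihilator R (QuotSMulTop g M) := by
          rw [Module.mem_annihilator]
          intro m
          obtain ⟨m, rfl⟩ := Submodule.mkQ_surjective _ m
          rw [← map_smul, Submodule.mkQ_apply, Submodule.Quotient.mk_eq_zero]
          exact Submodule.smul_mem_pointwise_smul _ _ _ trivial
        have hann : Module.annihilator R M ≤ Module.annihilator R (QuotSMulTop g M) :=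
          LinearMap.annihilator_le_of_surjective _ (Submodule.mkQ_surjective _)
        refine hI.trans (sup_le ?_ (hann.trans le_sup_right))
        refine Ideal.span_le.mpr ?_
        intro y hy
        rcases List.mem_cons.mp hy with rfl | hy
        · rw [hf, Algebra.smul_def]
          exact Ideal.mul_mem_left _ _ (sub_mem (le_sup_right (a := Ideal.ofList fs) hgann)
            (le_sup_left (b := Module.annihilator R (QuotSMulTop g M)) hr))
        · exact le_sup_left (b := Module.annihilator R (QuotSMulTop g M)) (Ideal.subset_span hy)
      · intro y hy
        exact hm y (List.mem_cons_of_mem _ hy)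
      · intro i hi
        have zero1 := AddCommGrpCat.isZero_of_iff_subsingleton.mpr (hext i (by simp; omega))
        have zero2 := AddCommGrpCat.isZero_of_iff_subsingleton.mpr (hext (i + 1) (by simp; omega))
        exact AddCommGrpCat.subsingleton_of_isZero <| ShortComplex.Exact.isZero_of_both_zeros
          ((Ext.covariant_sequence_exact₃' (ModuleCat.of R (R ⧸ I))
            (IsSMulRegular.smulShortComplex_shortExact (M := ModuleCat.of R M) hgreg)) i (i + 1) rfl)
          (zero1.eq_zero_of_src _) (zero2.eq_zero_of_tgt _)
    have h1 : IsWeaklyRegular M (g :: fs) := (isWeaklyRegular_cons_iff M g fs).mpr ⟨hgreg, key⟩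
    have h2 : IsWeaklyRegular M (fs ++ [g]) :=
      isWeaklyRegular_of_perm_of_subset_maximalIdeal h1 (List.perm_append_singleton g fs).symm (by
        intro y hy
        rcases List.mem_cons.mp hy with rfl | hy
        · exact hgm
        · exact hm y (List.mem_cons_of_mem _ hy))
    rw [isWeaklyRegular_append_iff] at h2
    have h3 : IsWeaklyRegular M (fs ++ [f]) := by
      rw [isWeaklyRegular_append_iff]
      refine ⟨h2.1, ?_⟩
      have h4 := h2.2
      rw [isWeaklyRegular_singleton_iff] at h4 ⊢
      rw [isSMulRegular_iff_right_eq_zero_of_smul] at h4 ⊢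
      intro m hm0
      apply h4
      have hr0 : r • m = 0 := by
        obtain ⟨m, rfl⟩ := Submodule.mkQ_surjective _ m
        rw [← map_smul, Submodule.mkQ_apply, Submodule.Quotient.mk_eq_zero]
        exact Submodule.smul_mem_smul hr trivial
      rw [hg, Algebra.smul_def, add_smul, hr0, mul_smul, hm0, smul_zero, add_zero]
    refine isWeaklyRegular_of_perm_of_subset_maximalIdeal h3 (List.perm_append_singleton f fs) ?_
    intro y hy
    rw [(List.perm_append_singleton f fs).mem_iff] at hy
    exact hm y hy

lemma wr_of_radical {R : Type} [CommRing R] [IsLocalRing R] [IsNoetherianRing R] [Algebra ℂ R]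
    (fs as : List R) (ha : IsRegular R as) (hlen : as.length = fs.length)
    (hm : ∀ r ∈ fs, r ∈ maximalIdeal R)
    (ham : ∀ r ∈ as, r ∈ maximalIdeal R)
    (hrad : maximalIdeal R ≤ (Ideal.ofList fs).radical) :
    IsWeaklyRegular R fs := by
  apply wr_of_ext (Ideal.ofList fs) fs R le_sup_left hm
  rw [← hlen]
  apply ModuleCat.subsingleton_ext_of_exists_isRegular (maximalIdeal R) _ _ _ _ as ham ha
  · change Module.support R (R ⧸ Ideal.ofList fs) ⊆ _
    rw [Module.support_eq_zeroLocus, Ideal.annihilator_quotient,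
      PrimeSpectrum.zeroLocus_subset_zeroLocus_iff]
    exact hrad
  · rw [lt_top_iff_ne_top]
    change (maximalIdeal R) • (⊤ : Submodule R R) ≠ ⊤
    rw [smul_eq_mul, Ideal.mul_top]
    exact Ideal.IsPrime.ne_top inferInstance
end WebbAux
namespace WebbAux
open RingTheory.Sequence IsLocalRing

lemma comp_mul {n : ℕ} (q : Fin n → ℚ) (a f : MvPolynomial (Fin n) ℂ) (d e : ℚ)
    (hf : IsWeightedHomogeneous q f e) :
    weightedHomogeneousComponent q d (a * f) = weightedHomogeneousComponent q (d - e) a * f := by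
  induction a using MvPolynomial.induction_on' with
  | monomial s c =>
    have h1 : IsWeightedHomogeneous q (monomial s c) (Finsupp.weight q s) :=
      isWeightedHomogeneous_monomial _ _ _ rfl
    rw [weightedHomogeneousComponent_of_mem h1, weightedHomogeneousComponent_of_mem (h1.mul hf)]
    by_cases h : d = Finsupp.weight q s + e
    · rw [if_pos h, if_pos (by linarith)]
    · rw [if_neg h, if_neg (by intro h'; apply h; linarith), zero_mul]
  | add p r hp hr => rw [add_mul, map_add, map_add, hp, hr, add_mul]

lemma comp_mem {n : ℕ} (q : Fin n → ℚ) (s : Set (MvPolynomial (Fin n) ℂ))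
    (hs : ∀ x ∈ s, ∃ e, IsWeightedHomogeneous q x e) {p : MvPolynomial (Fin n) ℂ}
    (hp : p ∈ Ideal.span s) (d : ℚ) : weightedHomogeneousComponent q d p ∈ Ideal.span s := by
  let _ := weightedGradedAlgebra ℂ q
  exact weightedHomogeneousComponent_mem_of_mem ℂ q (Ideal.homogeneous_span _ s hs) hp d

lemma weight_eq {n : ℕ} (q : Fin n → ℚ) (a : Fin n →₀ ℕ) :
    Finsupp.weight q a = ∑ i, (a i : ℚ) * q i := by
  rw [Finsupp.weight_apply, Finsupp.sum_fintype _ _ (by simp)]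
  simp

lemma comp_zero {n : ℕ} (q : Fin n → ℚ) (hq : ∀ i, 0 < q i) (p : MvPolynomial (Fin n) ℂ) :
    weightedHomogeneousComponent q 0 p = C (constantCoeff p) := by
  ext a
  rw [coeff_weightedHomogeneousComponent, coeff_C]
  by_cases ha : a = 0
  · subst ha
    simp [constantCoeff_eq]
  · rw [if_neg (Ne.symm ha), if_neg]
    rw [weight_eq]
    intro h
    rw [Finset.sum_eq_zero_iff_of_nonneg
      (fun j _ => mul_nonneg (Nat.cast_nonneg _) (hq j).le)] at h
    apply ha
    ext i
    have := h i (Finset.mem_univ i)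
    simpa [(hq i).ne'] using this

lemma X_regular (n : ℕ) :
    IsWeaklyRegular (MvPolynomial (Fin n) ℂ)
      (List.ofFn (fun i : Fin n => (X i : MvPolynomial (Fin n) ℂ))) := by
  constructor
  intro k hk
  have hk' : k < n := by simpa using hk
  have hspan : Ideal.ofList (List.take k (List.ofFn (fun i : Fin n => (X i : MvPolynomial (Fin n) ℂ))))
      = Ideal.span (X '' {i : Fin n | (i : ℕ) < k}) := by
    unfold Ideal.ofList
    congr 1
    ext y
    simp only [Set.mem_ofPred_eq, List.mem_take_iff_getElem, Set.mem_image]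
    constructor
    · rintro ⟨i, hi, rfl⟩
      simp at hi
      exact ⟨⟨i, by omega⟩, by simpa using hi.1, by simp⟩
    · rintro ⟨i, hi, rfl⟩
      exact ⟨i, by simp; omega, by simp⟩
  rw [isSMulRegular_quotient_iff_mem_of_smul_mem]
  intro p hp
  rw [smul_eq_mul, Ideal.mul_top, hspan] at hp ⊢
  rw [mem_ideal_span_X_image] at hp ⊢
  intro m hm
  obtain ⟨i, hi, him⟩ := hp (m + Finsupp.single ⟨k, hk'⟩ 1) (by
    rw [mem_support_iff] at hm ⊢
    simpa [mul_comm _ p, coeff_mul_X] using hm)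
  refine ⟨i, hi, ?_⟩
  have : i ≠ ⟨k, hk'⟩ := by
    rintro rfl
    simp at hi
  simpa [Finsupp.single_apply, this.symm] using him

/-- the maximal ideal at the origin -/
noncomputable def m0 (n : ℕ) : Ideal (MvPolynomial (Fin n) ℂ) := RingHom.ker (constantCoeff (R := ℂ) (σ := Fin n))

instance (n : ℕ) : (m0 n).IsPrime := RingHom.ker_isPrime _

lemma m0_eq (n : ℕ) : m0 n = Ideal.span (Set.range X) := by
  apply le_antisymm
  · intro p hp
    rw [← Set.image_univ, mem_ideal_span_X_image]
    intro m hm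
    by_contra h
    push Not at h
    have : m = 0 := by ext i; exact h i trivial
    subst this
    rw [mem_support_iff] at hm
    exact hm hp
  · rw [Ideal.span_le]
    rintro _ ⟨i, rfl⟩
    simp [m0]

lemma hom_reg {n : ℕ} (q : Fin n → ℚ) (hq : ∀ i, 0 < q i)
    (f : Fin n → MvPolynomial (Fin n) ℂ) (e : Fin n → ℚ)
    (hf : ∀ i, IsWeightedHomogeneous q (f i) (e i)) (hf0 : ∀ i, constantCoeff (f i) = 0)
    (hz : ∀ x : Fin n → ℂ, (∀ i, eval x (f i) = 0) → x = 0)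
    (k : ℕ) (hk : k < n) (d : ℚ) (g : MvPolynomial (Fin n) ℂ) (hg : IsWeightedHomogeneous q g d)
    (h : f ⟨k, hk⟩ * g ∈ Ideal.ofList ((List.ofFn f).take k)) :
    g ∈ Ideal.ofList ((List.ofFn f).take k) := by
  let R := MvPolynomial (Fin n) ℂ
  let S := Localization.AtPrime (m0 n)
  have hXm : ∀ r ∈ List.ofFn (fun i : Fin n => (X i : MvPolynomial (Fin n) ℂ)), r ∈ m0 n := by
    intro r hr
    obtain ⟨i, rfl⟩ := (List.mem_ofFn' _ _).mp hr
    simp [m0]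
  have hfm : ∀ r ∈ List.ofFn f, r ∈ m0 n := by
    intro r hr
    obtain ⟨i, rfl⟩ := (List.mem_ofFn' _ _).mp hr
    exact hf0 i
  have hmem : ∀ r ∈ m0 n, algebraMap R S r ∈ maximalIdeal S := by
    intro r hr
    rw [← Localization.AtPrime.map_eq_maximalIdeal]
    exact Ideal.mem_map_of_mem _ hr
  have hXreg := IsWeaklyRegular.isRegular_of_isLocalization_of_mem S (m0 n) (X_regular n) hXm
  have hnull : m0 n ≤ (Ideal.ofList (List.ofFn f)).radical := by
    rw [← vanishingIdeal_zeroLocus_eq_radical (K := ℂ)]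
    intro p hp
    rw [mem_vanishingIdeal_iff]
    intro x hx
    have : x = 0 := by
      apply hz
      intro i
      have := hx (f i) (Ideal.subset_span ((List.mem_ofFn' _ _).mpr ⟨i, rfl⟩))
      simpa [aeval_eq_eval] using this
    subst this
    have : constantCoeff p = 0 := hp
    rw [← this]
    simp [constantCoeff_eq, aeval_zero]
  have hwr : IsWeaklyRegular S ((List.ofFn f).map (algebraMap R S)) := by
    apply wr_of_radical _ _ hXreg (by simp)
    · intro r hr
      obtain ⟨r', hr', rfl⟩ := List.mem_map.mp hr
      exact hmem r' (hfm r' hr')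
    · intro r hr
      obtain ⟨r', hr', rfl⟩ := List.mem_map.mp hr
      exact hmem r' (hXm r' hr')
    · rw [← Localization.AtPrime.map_eq_maximalIdeal, ← Ideal.map_ofList]
      exact (Ideal.map_mono hnull).trans (Ideal.map_radical_le _)
  have hk1 := hwr.regular_mod_prev k (by simpa using hk)
  rw [isSMulRegular_quotient_iff_mem_of_smul_mem] at hk1
  have hk2 := hk1 (algebraMap R S g)
  rw [smul_eq_mul, Ideal.mul_top, ← List.map_take, ← Ideal.map_ofList, List.getElem_map,
    smul_eq_mul, ← map_mul] at hk2
  have hk3 := hk2 (Ideal.mem_map_of_mem _ (by simpa using h))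
  rw [IsLocalization.algebraMap_mem_map_algebraMap_iff (m0 n).primeCompl] at hk3
  obtain ⟨s, hs, hsg⟩ := hk3
  have h5 := comp_mem q _ (by
    intro x hx
    obtain ⟨i, rfl⟩ := (List.mem_ofFn' _ _).mp (List.mem_of_mem_take hx)
    exact ⟨e i, hf i⟩) hsg d
  rw [comp_mul q s g d d hg, sub_self, comp_zero q hq] at h5
  have hs0 : constantCoeff s ≠ 0 := hs
  have h6 := Ideal.mul_mem_left _ (C (constantCoeff s)⁻¹) h5
  rwa [← mul_assoc, ← C_mul, inv_mul_cancel₀ hs0, C_1, one_mul] at h6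

lemma finite_weight {n : ℕ} (q : Fin n → ℚ) (hq : ∀ i, 0 < q i) (d : ℚ) :
    {a : Fin n →₀ ℕ | Finsupp.weight q a = d}.Finite := by
  refine (Set.finite_Iic (Finsupp.equivFunOnFinite.symm (fun i => ⌊d / q i⌋₊))).subset ?_
  intro a ha i
  have ha' : Finsupp.weight q a = d := ha
  have h : (a i : ℚ) * q i ≤ d := by
    rw [weight_eq] at ha'
    rw [← ha']
    exact Finset.single_le_sum (f := fun i => (a i : ℚ) * q i)
      (fun j _ => mul_nonneg (Nat.cast_nonneg _) (hq j).le) (Finset.mem_univ i)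
  exact Nat.le_floor ((le_div_iff₀ (hq i)).mpr h)

/-- the coefficients of weight `d` -/
noncomputable def coefS {n : ℕ} (q : Fin n → ℚ) (d : ℚ) : MvPolynomial (Fin n) ℂ →ₗ[ℂ]
    ({a : Fin n →₀ ℕ | Finsupp.weight q a = d} → ℂ) :=
  LinearMap.pi fun a => lcoeff ℂ a.1

lemma coefS_apply {n : ℕ} (q : Fin n → ℚ) (d : ℚ) (p : MvPolynomial (Fin n) ℂ)
    (a : {a : Fin n →₀ ℕ | Finsupp.weight q a = d}) : coefS q d p a = coeff a.1 p := rfl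

lemma coefS_inj {n : ℕ} (q : Fin n → ℚ) (d : ℚ) {x y : MvPolynomial (Fin n) ℂ}
    (hx : IsWeightedHomogeneous q x d) (hy : IsWeightedHomogeneous q y d)
    (h : coefS q d x = coefS q d y) : x = y := by
  ext a
  by_cases ha : Finsupp.weight q a = d
  · exact congrFun h ⟨a, ha⟩
  · rw [hx.coeff_eq_zero a ha, hy.coeff_eq_zero a ha]

lemma fd {n : ℕ} (q : Fin n → ℚ) (hq : ∀ i, 0 < q i) (d : ℚ) :
    FiniteDimensional ℂ (weightedHomogeneousSubmodule ℂ q d) := by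
  have := (finite_weight q hq d).to_subtype
  refine FiniteDimensional.of_injective
    (V₂ := {a : Fin n →₀ ℕ | Finsupp.weight q a = d} → ℂ)
    ((coefS q d).comp (weightedHomogeneousSubmodule ℂ q d).subtype) ?_
  intro x y h
  exact Subtype.ext (coefS_inj q d x.2 y.2 h)

lemma hilb_step {n : ℕ} (q : Fin n → ℚ) (hq : ∀ i, 0 < q i) (I : Ideal (MvPolynomial (Fin n) ℂ))
    (hI : ∀ p ∈ I, ∀ d, weightedHomogeneousComponent q d p ∈ I)
    (f : MvPolynomial (Fin n) ℂ) (e : ℚ) (hf : IsWeightedHomogeneous q f e) (hf0 : f ≠ 0)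
    (hreg : ∀ d g, IsWeightedHomogeneous q g d → f * g ∈ I → g ∈ I) (d : ℚ) :
    Module.finrank ℂ ↥(weightedHomogeneousSubmodule ℂ q d ⊓ (I ⊔ Ideal.span {f}).restrictScalars ℂ)
      + Module.finrank ℂ ↥(weightedHomogeneousSubmodule ℂ q (d - e) ⊓ I.restrictScalars ℂ)
    = Module.finrank ℂ ↥(weightedHomogeneousSubmodule ℂ q d ⊓ I.restrictScalars ℂ)
      + Module.finrank ℂ ↥(weightedHomogeneousSubmodule ℂ q (d - e)) := by
  have := fd q hq d
  have := fd q hq (d - e)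
  let μ : MvPolynomial (Fin n) ℂ →ₗ[ℂ] MvPolynomial (Fin n) ℂ := LinearMap.mulLeft ℂ f
  have hμ : Function.Injective μ := fun a b h => mul_left_cancel₀ hf0 h
  have h1 : weightedHomogeneousSubmodule ℂ q d ⊓ (I ⊔ Ideal.span {f}).restrictScalars ℂ
      = (weightedHomogeneousSubmodule ℂ q d ⊓ I.restrictScalars ℂ) ⊔
        (weightedHomogeneousSubmodule ℂ q (d - e)).map μ := by
    apply le_antisymm
    · rintro p ⟨hp, hp2⟩
      have hp2 : p ∈ I ⊔ Ideal.span {f} := hp2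
      obtain ⟨i, hi, y, hy, rfl⟩ := Submodule.mem_sup.mp hp2
      obtain ⟨a, rfl⟩ := Ideal.mem_span_singleton'.mp hy
      have h := IsWeightedHomogeneous.weightedHomogeneousComponent_same hp
      rw [map_add, comp_mul q a f d e hf] at h
      rw [← h]
      refine Submodule.add_mem_sup ⟨weightedHomogeneousComponent_mem _ _ _, hI i hi d⟩
        ⟨_, weightedHomogeneousComponent_mem q a (d - e), ?_⟩
      exact mul_comm _ _
    · refine sup_le (inf_le_inf_left _ (fun x hx => Ideal.mem_sup_left hx)) ?_
      rintro _ ⟨g, hg, rfl⟩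
      refine ⟨?_, Ideal.mem_sup_right (Ideal.mul_mem_right _ _ (Ideal.mem_span_singleton_self f))⟩
      have := hf.mul hg
      rwa [add_sub_cancel] at this
  have h2 : (weightedHomogeneousSubmodule ℂ q d ⊓ I.restrictScalars ℂ) ⊓
        (weightedHomogeneousSubmodule ℂ q (d - e)).map μ =
        (weightedHomogeneousSubmodule ℂ q (d - e) ⊓ I.restrictScalars ℂ).map μ := by
    apply le_antisymm
    · rintro _ ⟨⟨_, h⟩, ⟨g, hg, rfl⟩⟩
      exact ⟨g, ⟨hg, hreg _ g hg h⟩, rfl⟩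
    · rintro _ ⟨g, ⟨hg, hgI⟩, rfl⟩
      refine ⟨⟨?_, Ideal.mul_mem_left I f hgI⟩, ⟨g, hg, rfl⟩⟩
      have := hf.mul hg
      rwa [add_sub_cancel] at this
  have h3 := Submodule.finrank_sup_add_finrank_inf_eq
    (weightedHomogeneousSubmodule ℂ q d ⊓ I.restrictScalars ℂ)
    ((weightedHomogeneousSubmodule ℂ q (d - e)).map μ)
  rw [h2, ← (Submodule.equivMapOfInjective μ hμ _).finrank_eq,
    ← (Submodule.equivMapOfInjective μ hμ _).finrank_eq] at h3
  rw [h1, h3]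

lemma take_succ' {n : ℕ} (f : Fin n → MvPolynomial (Fin n) ℂ) (k : ℕ) (hk : k < n) :
    Ideal.ofList ((List.ofFn f).take (k + 1)) =
      Ideal.ofList ((List.ofFn f).take k) ⊔ Ideal.span {f ⟨k, hk⟩} := by
  rw [List.take_succ_eq_append_getElem (by simpa using hk), Ideal.ofList_append,
    Ideal.ofList_singleton]
  simp

lemma hilb_eq {n : ℕ} (q : Fin n → ℚ) (hq : ∀ i, 0 < q i)
    (f f' : Fin n → MvPolynomial (Fin n) ℂ) (e : Fin n → ℚ)
    (hf : ∀ i, IsWeightedHomogeneous q (f i) (e i)) (hf0 : ∀ i, constantCoeff (f i) = 0)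
    (hz : ∀ x : Fin n → ℂ, (∀ i, eval x (f i) = 0) → x = 0)
    (hf' : ∀ i, IsWeightedHomogeneous q (f' i) (e i)) (hf0' : ∀ i, constantCoeff (f' i) = 0)
    (hz' : ∀ x : Fin n → ℂ, (∀ i, eval x (f' i) = 0) → x = 0)
    (k : ℕ) (hk : k ≤ n) (d : ℚ) :
    Module.finrank ℂ ↥(weightedHomogeneousSubmodule ℂ q d ⊓
      (Ideal.ofList ((List.ofFn f).take k)).restrictScalars ℂ) =
    Module.finrank ℂ ↥(weightedHomogeneousSubmodule ℂ q d ⊓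
      (Ideal.ofList ((List.ofFn f').take k)).restrictScalars ℂ) := by
  induction k generalizing d with
  | zero => rfl
  | succ k ih =>
    have aux : ∀ (f : Fin n → MvPolynomial (Fin n) ℂ)
      (hf : ∀ i, IsWeightedHomogeneous q (f i) (e i)) (hf0 : ∀ i, constantCoeff (f i) = 0)
      (hz : ∀ x : Fin n → ℂ, (∀ i, eval x (f i) = 0) → x = 0),
      Module.finrank ℂ ↥(weightedHomogeneousSubmodule ℂ q d ⊓
        (Ideal.ofList ((List.ofFn f).take (k+1))).restrictScalars ℂ)
      + Module.finrank ℂ ↥(weightedHomogeneousSubmodule ℂ q (d - e ⟨k, hk⟩) ⊓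
        (Ideal.ofList ((List.ofFn f).take k)).restrictScalars ℂ)
      = Module.finrank ℂ ↥(weightedHomogeneousSubmodule ℂ q d ⊓
        (Ideal.ofList ((List.ofFn f).take k)).restrictScalars ℂ)
      + Module.finrank ℂ ↥(weightedHomogeneousSubmodule ℂ q (d - e ⟨k, hk⟩)) := by
      intro f hf hf0 hz
      rw [take_succ' f k hk]
      have hr := hom_reg q hq f e hf hf0 hz k hk
      apply hilb_step q hq _ _ _ _ (hf _)
      · intro h0
        have h1 : (1 : MvPolynomial (Fin n) ℂ) ∈ Ideal.ofList ((List.ofFn f).take k) :=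
          hr 0 1 (isWeightedHomogeneous_one _ _) (by rw [h0, zero_mul]; exact zero_mem _)
        have h2 : Ideal.ofList ((List.ofFn f).take k) ≤ m0 n := by
          refine Ideal.span_le.mpr ?_
          intro x hx
          obtain ⟨i, rfl⟩ := (List.mem_ofFn' _ _).mp (List.mem_of_mem_take hx)
          exact hf0 i
        have h3 := h2 h1
        simp [m0] at h3
      · exact hr
      · intro p hp d
        exact comp_mem q _ (by
          intro x hx
          obtain ⟨i, rfl⟩ := (List.mem_ofFn' _ _).mp (List.mem_of_mem_take hx)
          exact ⟨e i, hf i⟩) hp d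
    have a1 := aux f hf hf0 hz
    have a2 := aux f' hf' hf0' hz'
    rw [ih (by omega), ih (by omega)] at a1
    omega

lemma piece_eq {n : ℕ} (q : Fin n → ℚ) (hq : ∀ i, 0 < q i)
    (f f' : Fin n → MvPolynomial (Fin n) ℂ) (e : Fin n → ℚ)
    (hf : ∀ i, IsWeightedHomogeneous q (f i) (e i)) (hf0 : ∀ i, constantCoeff (f i) = 0)
    (hz : ∀ x : Fin n → ℂ, (∀ i, eval x (f i) = 0) → x = 0)
    (hf' : ∀ i, IsWeightedHomogeneous q (f' i) (e i)) (hf0' : ∀ i, constantCoeff (f' i) = 0)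
    (hz' : ∀ x : Fin n → ℂ, (∀ i, eval x (f' i) = 0) → x = 0)
    (d : ℚ) (h : weightedHomogeneousSubmodule ℂ q d ≤ (Ideal.span (Set.range f)).restrictScalars ℂ) :
    weightedHomogeneousSubmodule ℂ q d ≤ (Ideal.span (Set.range f')).restrictScalars ℂ := by
  have := fd q hq d
  have h1 := hilb_eq q hq f f' e hf hf0 hz hf' hf0' hz' n le_rfl d
  have h2 : ∀ f : Fin n → MvPolynomial (Fin n) ℂ, Ideal.ofList ((List.ofFn f).take n) =
      Ideal.span (Set.range f) := by
    intro f
    rw [List.take_of_length_le (by simp)]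
    unfold Ideal.ofList
    congr 1
    ext y
    simp [List.mem_ofFn']
  rw [h2, h2, inf_eq_left.mpr h] at h1
  exact inf_eq_left.mp (Submodule.eq_of_le_of_finrank_eq inf_le_left h1.symm)
end WebbAux
namespace WebbAux
open Topology

section
variable {n m : ℕ} (L : (Fin m → ℂ) →ₗ[ℂ] (Fin n → MvPolynomial (Fin n) ℂ))

/-- perturbed identity substitution -/
noncomputable def phi (c : Fin m → ℂ) : MvPolynomial (Fin n) ℂ →ₐ[ℂ] MvPolynomial (Fin n) ℂ :=
  aeval fun i => X i + L c i

/-- infinitesimal action -/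
noncomputable def DD (p : MvPolynomial (Fin n) ℂ) : (Fin m → ℂ) →ₗ[ℂ] MvPolynomial (Fin n) ℂ :=
  ∑ i, (LinearMap.mulRight ℂ (pderiv i p)).comp ((LinearMap.proj i).comp L)

lemma DD_apply (p : MvPolynomial (Fin n) ℂ) (c : Fin m → ℂ) :
    DD L p c = ∑ i, L c i * pderiv i p := by
  simp [DD]

lemma phi_zero (p : MvPolynomial (Fin n) ℂ) : phi L 0 p = p := by
  simp [phi]

lemma DD_mul_X (p : MvPolynomial (Fin n) ℂ) (i : Fin n) (c : Fin m → ℂ) :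
    DD L (p * X i) c = DD L p c * X i + p * L c i := by
  simp only [DD_apply, pderiv_mul, mul_add, Finset.sum_add_distrib, Finset.sum_mul]
  congr 1
  · exact Finset.sum_congr rfl fun j _ => by ring
  · rw [Finset.sum_eq_single i]
    · simp; ring
    · intro j _ hj
      simp [pderiv_X_of_ne hj.symm]
    · simp

lemma hasDeriv (p : MvPolynomial (Fin n) ℂ) (a : Fin n →₀ ℕ) :
    HasStrictFDerivAt (fun c => coeff a (phi L c p))
      (LinearMap.toContinuousLinearMap ((lcoeff ℂ a).comp (DD L p))) 0 := by
  induction p using MvPolynomial.induction_on generalizing a with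
  | C r =>
    have h : (LinearMap.toContinuousLinearMap ((lcoeff ℂ a).comp (DD L (C r)))) = 0 := by
      ext c
      simp [DD_apply]
    rw [h]
    simp only [phi, algHom_C]
    exact hasStrictFDerivAt_const _ _
  | add p q hp hq =>
    have h : (LinearMap.toContinuousLinearMap ((lcoeff ℂ a).comp (DD L (p + q)))) =
      (LinearMap.toContinuousLinearMap ((lcoeff ℂ a).comp (DD L p))) +
      (LinearMap.toContinuousLinearMap ((lcoeff ℂ a).comp (DD L q))) := by
      ext c
      have h0 : DD L (p + q) c = DD L p c + DD L q c := by
        simp only [DD_apply, map_add, mul_add, Finset.sum_add_distrib]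
      simp [h0]
    rw [h]
    simp only [map_add, coeff_add]
    exact (hp a).add (hq a)
  | mul_X p i hp =>
    have h1 : ∀ b : Fin n →₀ ℕ, HasStrictFDerivAt (fun c => coeff b (X i + L c i))
        (LinearMap.toContinuousLinearMap ((lcoeff ℂ b).comp ((LinearMap.proj i).comp L))) 0 := by
      intro b
      simp only [coeff_add]
      exact (LinearMap.toContinuousLinearMap
        ((lcoeff ℂ b).comp ((LinearMap.proj i).comp L))).hasStrictFDerivAt.const_add _
    have h2 : (fun c => coeff a (phi L c (p * X i))) = fun c =>
        ∑ x ∈ Finset.HasAntidiagonal.antidiagonal a, coeff x.1 (phi L c p) * coeff x.2 (X i + L c i) := by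
      funext c
      rw [map_mul, coeff_mul]
      simp [phi]
    rw [h2]
    refine (HasStrictFDerivAt.fun_sum fun x _ => (hp x.1).mul (h1 x.2)).congr_fderiv ?_
    ext c
    simp only [phi_zero, DD_mul_X, LinearMap.coe_toContinuousLinearMap', LinearMap.comp_apply,
      coeff_add, lcoeff_apply, coeff_mul, _root_.sum_apply,
      _root_.add_apply, _root_.smul_apply, LinearMap.proj_apply]
    rw [← Finset.sum_add_distrib]
    refine Finset.sum_congr rfl fun x _ => ?_
    simp
    ring
end

lemma chain {n : ℕ} (g : Fin n → MvPolynomial (Fin n) ℂ) (p : MvPolynomial (Fin n) ℂ) (j : Fin n) :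
    pderiv j (aeval g p) = ∑ i, aeval g (pderiv i p) * pderiv j (g i) := by
  induction p using MvPolynomial.induction_on with
  | C r => simp
  | add p q hp hq => simp only [map_add, hp, hq, add_mul, Finset.sum_add_distrib]
  | mul_X p i hp =>
    have h1 : ∀ k : Fin n, aeval g (pderiv k (p * X i)) * pderiv j (g k) =
        (aeval g (pderiv k p) * pderiv j (g k)) * g i +
        aeval g p * (aeval g (pderiv k (X i : MvPolynomial (Fin n) ℂ)) * pderiv j (g k)) := by
      intro k
      rw [pderiv_mul, map_add, map_mul, map_mul, aeval_X]
      ring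
    have h2 : ∑ k : Fin n, aeval g (pderiv k (X i : MvPolynomial (Fin n) ℂ)) * pderiv j (g k) = pderiv j (g i) := by
      rw [Finset.sum_eq_single i]
      · rw [pderiv_X_self, map_one, one_mul]
      · intro k _ hk
        rw [pderiv_X_of_ne hk.symm, map_zero, zero_mul]
      · intro h
        exact absurd (Finset.mem_univ _) h
    rw [Finset.sum_congr rfl fun k _ => h1 k, Finset.sum_add_distrib, ← Finset.sum_mul,
      ← Finset.mul_sum, h2, ← hp, map_mul, aeval_X, pderiv_mul]

lemma jac_le {n : ℕ} (e : MvPolynomial (Fin n) ℂ →ₐ[ℂ] MvPolynomial (Fin n) ℂ)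
    (W : MvPolynomial (Fin n) ℂ) :
    Ideal.span (Set.range fun i => pderiv i (e W)) ≤
      (Ideal.span (Set.range fun i => pderiv i W)).map e := by
  rw [Ideal.span_le]
  rintro _ ⟨j, rfl⟩
  have he : e = aeval (fun i => e (X i)) := by
    apply MvPolynomial.algHom_ext
    simp
  simp only
  rw [he, chain, ← he]
  refine Ideal.sum_mem _ fun i _ => Ideal.mul_mem_right _ _ (Ideal.mem_map_of_mem e ?_)
  exact Ideal.subset_span ⟨i, rfl⟩

lemma jac_eq {n : ℕ} (e : MvPolynomial (Fin n) ℂ ≃ₐ[ℂ] MvPolynomial (Fin n) ℂ)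
    (W : MvPolynomial (Fin n) ℂ) :
    Ideal.span (Set.range fun i => pderiv i (e W)) =
      (Ideal.span (Set.range fun i => pderiv i W)).map (e : _ →+* _) := by
  apply le_antisymm
  · exact jac_le e.toAlgHom W
  · have h := jac_le e.symm.toAlgHom (e W)
    have h2 := Ideal.map_mono (f := (e : MvPolynomial (Fin n) ℂ →+* MvPolynomial (Fin n) ℂ)) h
    refine le_trans ?_ (h2.trans ?_)
    · apply Ideal.map_mono
      apply le_of_eq
      congr
      simp
    · rw [Ideal.map_le_iff_le_comap, Ideal.map_le_iff_le_comap]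
      intro x hx
      simpa using hx

lemma finite_not_surj {E F : Type*} [AddCommGroup E] [Module ℂ E] [AddCommGroup F] [Module ℂ F]
    [FiniteDimensional ℂ F] (A B : E →ₗ[ℂ] F) (hA : Function.Surjective A) :
    {t : ℂ | ¬ Function.Surjective (A + t • B)}.Finite := by
  obtain ⟨S, hS⟩ := A.exists_rightInverse_of_surjective (LinearMap.range_eq_top.mpr hA)
  let T : Module.End ℂ F := B.comp S
  refine ((Module.End.finite_hasEigenvalue T).image (fun μ => -μ⁻¹)).subset ?_
  intro t ht
  have ht1 : ¬ Function.Surjective ((A + t • B).comp S) := by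
    intro h
    exact ht (Function.Surjective.of_comp h)
  have h2 : (A + t • B).comp S = 1 + t • T := by
    rw [LinearMap.add_comp, hS]; rfl
  rw [h2, ← LinearMap.injective_iff_surjective, ← LinearMap.ker_eq_bot,
    LinearMap.ker_eq_bot'] at ht1
  push Not at ht1
  obtain ⟨v, hv, hv0⟩ := ht1
  have hv' : v + t • T v = 0 := hv
  have ht0 : t ≠ 0 := by
    rintro rfl
    simp at hv'
    exact hv0 hv'
  refine ⟨-t⁻¹, ?_, by simp⟩
  apply Module.End.hasEigenvalue_of_hasEigenvector (x := v)
  rw [Module.End.hasEigenvector_iff, Module.End.mem_eigenspace_iff]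
  refine ⟨?_, hv0⟩
  have h5 : t • T v = - v := by
    rw [eq_neg_iff_add_eq_zero, add_comm]; exact hv'
  calc T v = t⁻¹ • (t • T v) := by rw [smul_smul, inv_mul_cancel₀ ht0, one_smul]
    _ = _ := by rw [h5]; simp
end WebbAux
namespace WebbAux
open Topology

lemma aeval_wh {n : ℕ} (q : Fin n → ℚ) (g : Fin n → MvPolynomial (Fin n) ℂ)
    (hg : ∀ i, IsWeightedHomogeneous q (g i) (q i)) {p : MvPolynomial (Fin n) ℂ} {d : ℚ}
    (hp : IsWeightedHomogeneous q p d) : IsWeightedHomogeneous q (aeval g p) d := by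
  have h0 : aeval g p = ∑ a ∈ p.support, aeval g (monomial a (coeff a p)) := by
    conv_lhs => rw [p.as_sum]
    rw [map_sum]
  rw [h0, ← mem_weightedHomogeneousSubmodule]
  refine Submodule.sum_mem _ fun a ha => ?_
  rw [mem_weightedHomogeneousSubmodule, aeval_monomial]
  have h1 : IsWeightedHomogeneous q (a.prod fun i k => g i ^ k) d := by
    rw [← hp (mem_support_iff.mp ha), Finsupp.weight_apply]
    exact IsWeightedHomogeneous.prod _ _ _ fun i _ => (hg i).pow _
  have h2 := (isWeightedHomogeneous_C q (coeff a p)).mul h1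
  rwa [zero_add] at h2

lemma surj_inj {R : Type*} [CommRing R] [IsNoetherianRing R] (f : R →+* R)
    (hf : Function.Surjective f) : Function.Injective f := by
  have hs : ∀ k, Function.Surjective (f^[k]) := fun k => hf.iterate k
  let K : ℕ →o Ideal R := ⟨fun k => RingHom.ker (f ^ k), by
    refine monotone_nat_of_le_succ fun k x hx => ?_
    rw [RingHom.mem_ker] at hx ⊢
    rw [pow_succ', RingHom.mul_def, RingHom.comp_apply, hx, map_zero]⟩
  obtain ⟨k, hk⟩ := monotone_stabilizes_iff_noetherian.mpr (inferInstance : IsNoetherian R R) K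
  rw [injective_iff_map_eq_zero]
  intro x hx
  obtain ⟨y, rfl⟩ := hs k x
  have h1 : y ∈ K (k + 1) := by
    change (f ^ (k + 1)) y = 0
    rw [RingHom.coe_pow, Function.iterate_succ_apply', hx]
  rw [← hk (k + 1) (Nat.le_succ k)] at h1
  have h2 : (f ^ k) y = 0 := h1
  rwa [RingHom.coe_pow] at h2

lemma phi_surj {n m : ℕ} (q : Fin n → ℚ) (hq : ∀ i, 0 < q i)
    (L : (Fin m → ℂ) →ₗ[ℂ] (Fin n → MvPolynomial (Fin n) ℂ))
    (hL : ∀ c i, IsWeightedHomogeneous q (L c i) (q i)) :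
    ∀ᶠ c in 𝓝 (0 : Fin m → ℂ), Function.Surjective (phi L c) := by
  have hph : ∀ c {p d}, IsWeightedHomogeneous q p d → IsWeightedHomogeneous q (phi L c p) d := by
    intro c p d hp
    exact aeval_wh q _ (fun i => (isWeightedHomogeneous_X ℂ q i).add (hL c i)) hp
  have key : ∀ i, ∀ᶠ c in 𝓝 (0 : Fin m → ℂ), ∃ p, phi L c p = X i := by
    intro i
    have hfin := (finite_weight q hq (q i)).to_subtype
    let _ := Fintype.ofFinite {a : Fin n →₀ ℕ | Finsupp.weight q a = q i}
    classical
    let M : (Fin m → ℂ) → Matrix {a : Fin n →₀ ℕ | Finsupp.weight q a = q i}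
      {a : Fin n →₀ ℕ | Finsupp.weight q a = q i} ℂ := fun c => Matrix.of fun a b =>
        coeff a.1 (phi L c (monomial b.1 1))
    have hM : ContinuousAt M 0 := by
      refine continuousAt_pi.mpr fun a => continuousAt_pi.mpr fun b => ?_
      exact (hasDeriv L (monomial b.1 1) a.1).continuousAt
    have hM0 : M 0 = 1 := by
      ext a b
      simp only [M, Matrix.of_apply, phi_zero, coeff_monomial, Matrix.one_apply, Subtype.ext_iff]
      simp [eq_comm]
    have hdet : ContinuousAt (fun c => (M c).det) 0 :=
      ContinuousAt.comp (g := Matrix.det) (Continuous.matrix_det continuous_id).continuousAt hM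
    have hne : ∀ᶠ c in 𝓝 (0 : Fin m → ℂ), (M c).det ≠ 0 := by
      apply hdet.eventually_ne
      rw [hM0]; simp
    filter_upwards [hne] with c hc
    have hu : IsUnit (M c) := (Matrix.isUnit_iff_isUnit_det _).mpr (isUnit_iff_ne_zero.mpr hc)
    obtain ⟨v, hv⟩ := (Matrix.mulVec_surjective_iff_isUnit.mpr hu) (coefS q (q i) (X i))
    refine ⟨∑ b, v b • monomial b.1 1, ?_⟩
    apply coefS_inj q (q i) _ (isWeightedHomogeneous_X ℂ q i)
    · rw [← hv]
      ext a
      simp only [coefS_apply, map_sum, map_smul, coeff_sum, coeff_smul, Matrix.mulVec, dotProduct,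
        M, Matrix.of_apply, smul_eq_mul]
      exact Finset.sum_congr rfl fun b _ => mul_comm _ _
    · apply hph
      rw [← mem_weightedHomogeneousSubmodule]
      refine Submodule.sum_mem _ fun b _ => Submodule.smul_mem _ _ ?_
      exact isWeightedHomogeneous_monomial _ _ _ b.2
  filter_upwards [Filter.eventually_all.mpr key] with c hc
  choose p hp using hc
  intro y
  refine ⟨aeval p y, ?_⟩
  rw [← AlgHom.comp_apply]
  conv_rhs => rw [← AlgHom.id_apply (R := ℂ) y]
  congr 1
  apply MvPolynomial.algHom_ext
  intro i
  simp only [AlgHom.comp_apply, aeval_X, hp, AlgHom.id_apply]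

lemma phi_bij {n m : ℕ} (L : (Fin m → ℂ) →ₗ[ℂ] (Fin n → MvPolynomial (Fin n) ℂ)) (c : Fin m → ℂ)
    (h : Function.Surjective (phi L c)) : Function.Bijective (phi L c) :=
  ⟨surj_inj (phi L c : MvPolynomial (Fin n) ℂ →+* MvPolynomial (Fin n) ℂ) h, h⟩

/-- all weighted vector fields -/
lemma exists_L {n : ℕ} (q : Fin n → ℚ) (hq : ∀ i, 0 < q i) :
    ∃ (m : ℕ) (L : (Fin m → ℂ) →ₗ[ℂ] (Fin n → MvPolynomial (Fin n) ℂ)),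
      (∀ c i, IsWeightedHomogeneous q (L c i) (q i)) ∧
      ∀ g : Fin n → MvPolynomial (Fin n) ℂ, (∀ i, IsWeightedHomogeneous q (g i) (q i)) →
        ∃ c, L c = g := by
  have := fun i => fd q hq (q i)
  let E := ∀ i, weightedHomogeneousSubmodule ℂ q (q i)
  let b := Module.finBasis ℂ E
  let P : E →ₗ[ℂ] (Fin n → MvPolynomial (Fin n) ℂ) :=
    LinearMap.pi fun i => (Submodule.subtype _).comp (LinearMap.proj i)
  refine ⟨_, P.comp b.equivFun.symm.toLinearMap, ?_, ?_⟩
  · intro c i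
    exact (b.equivFun.symm c i).2
  · intro g hg
    refine ⟨b.equivFun (fun i => ⟨g i, hg i⟩), ?_⟩
    rw [LinearMap.comp_apply, LinearEquiv.coe_coe, LinearEquiv.symm_apply_apply]
    rfl

lemma coefS_surj {n : ℕ} (q : Fin n → ℚ) (hq : ∀ i, 0 < q i) (d : ℚ)
    (v : {a : Fin n →₀ ℕ | Finsupp.weight q a = d} → ℂ) :
    ∃ p, IsWeightedHomogeneous q p d ∧ coefS q d p = v := by
  have hfin := (finite_weight q hq d).to_subtype
  let _ := Fintype.ofFinite {a : Fin n →₀ ℕ | Finsupp.weight q a = d}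
  classical
  refine ⟨∑ b, v b • monomial b.1 1, ?_, ?_⟩
  · rw [← mem_weightedHomogeneousSubmodule]
    refine Submodule.sum_mem _ fun b _ => Submodule.smul_mem _ _ ?_
    exact isWeightedHomogeneous_monomial _ _ _ b.2
  · ext a
    simp only [coefS_apply, coeff_sum, coeff_smul, coeff_monomial, smul_eq_mul]
    rw [Finset.sum_eq_single a]
    · simp
    · intro b _ hb
      rw [if_neg (fun h => hb (Subtype.ext h)), mul_zero]
    · simp

lemma DD_surj {n m : ℕ} (q : Fin n → ℚ) (hq : ∀ i, 0 < q i)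
    (L : (Fin m → ℂ) →ₗ[ℂ] (Fin n → MvPolynomial (Fin n) ℂ))
    (hLs : ∀ g : Fin n → MvPolynomial (Fin n) ℂ, (∀ i, IsWeightedHomogeneous q (g i) (q i)) →
        ∃ c, L c = g)
    (W : MvPolynomial (Fin n) ℂ) (hW : IsWeightedHomogeneous q W 1)
    (h : weightedHomogeneousSubmodule ℂ q 1 ≤
      (Ideal.span (Set.range fun i => pderiv i W)).restrictScalars ℂ) :
    Function.Surjective ((coefS q 1).comp (DD L W)) := by
  intro v
  obtain ⟨p, hp, rfl⟩ := coefS_surj q hq 1 v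
  have h1 : p ∈ Ideal.span (Set.range fun i => pderiv i W) := h hp
  rw [Ideal.mem_span_range_iff_exists_fun] at h1
  obtain ⟨a, ha⟩ := h1
  obtain ⟨c, hc⟩ := hLs (fun i => weightedHomogeneousComponent q (q i) (a i))
    (fun i => weightedHomogeneousComponent_isWeightedHomogeneous _ _)
  refine ⟨c, ?_⟩
  rw [LinearMap.comp_apply, DD_apply, hc]
  have h2 : weightedHomogeneousComponent q 1 p = p :=
    hp.weightedHomogeneousComponent_same
  have h3 : ∑ i, weightedHomogeneousComponent q (q i) (a i) * pderiv i W = p := by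
    rw [← h2]
    conv_rhs => rw [← ha]
    rw [map_sum]
    refine Finset.sum_congr rfl fun i _ => ?_
    have h4 : IsWeightedHomogeneous q (pderiv i W) (1 - q i) := hW.pderiv (by ring)
    rw [comp_mul q (a i) (pderiv i W) 1 (1 - q i) h4, sub_sub_cancel]
  rw [h3]

lemma local_rel {n m : ℕ} (q : Fin n → ℚ) (hq : ∀ i, 0 < q i)
    (L : (Fin m → ℂ) →ₗ[ℂ] (Fin n → MvPolynomial (Fin n) ℂ))
    (hL : ∀ c i, IsWeightedHomogeneous q (L c i) (q i))
    (W : MvPolynomial (Fin n) ℂ) (hW : IsWeightedHomogeneous q W 1)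
    (hs : Function.Surjective ((coefS q 1).comp (DD L W)))
    (V : MvPolynomial (Fin n) ℂ) (hV : IsWeightedHomogeneous q V 1) :
    ∀ᶠ t in 𝓝 (0 : ℂ), ∃ e : MvPolynomial (Fin n) ℂ ≃ₐ[ℂ] MvPolynomial (Fin n) ℂ,
      e W = W + t • V := by
  have hfin := (finite_weight q hq 1).to_subtype
  let _ := Fintype.ofFinite {a : Fin n →₀ ℕ | Finsupp.weight q a = 1}
  have hd : HasStrictFDerivAt (fun c => coefS q 1 (phi L c W))
      (LinearMap.toContinuousLinearMap ((coefS q 1).comp (DD L W))) 0 := by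
    apply hasStrictFDerivAt_pi'.mpr
    intro a
    exact hasDeriv L W a.1
  have hmap := hd.map_nhds_eq_of_surj (LinearMap.range_eq_top.mpr hs)
  rw [phi_zero] at hmap
  have h1 := Filter.image_mem_map (m := fun c => coefS q 1 (phi L c W)) (phi_surj q hq L hL)
  rw [hmap] at h1
  have hcont : Continuous fun t : ℂ => coefS q 1 (W + t • V) := by
    refine continuous_pi fun a => ?_
    simp only [coefS_apply, coeff_add, coeff_smul]
    fun_prop
  have h2 := hcont.tendsto 0
  rw [zero_smul, add_zero] at h2
  filter_upwards [h2 h1] with t ht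
  obtain ⟨c, hc, hct⟩ := ht
  refine ⟨AlgEquiv.ofBijective (phi L c) (phi_bij L c hc), ?_⟩
  refine coefS_inj q 1 ?_ ?_ hct
  · exact aeval_wh q _ (fun i => (isWeightedHomogeneous_X ℂ q i).add (hL c i)) hW
  · exact hW.add (Submodule.smul_mem (weightedHomogeneousSubmodule ℂ q 1) t hV)

lemma exists_equiv {n : ℕ} (q : Fin n → ℚ) (hq : ∀ i, 0 < q i)
    (W₁ W₂ : MvPolynomial (Fin n) ℂ) (hW₁ : IsWeightedHomogeneous q W₁ 1)
    (hW₂ : IsWeightedHomogeneous q W₂ 1)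
    (h₁ : weightedHomogeneousSubmodule ℂ q 1 ≤
      (Ideal.span (Set.range fun i => pderiv i W₁)).restrictScalars ℂ)
    (h₂ : weightedHomogeneousSubmodule ℂ q 1 ≤
      (Ideal.span (Set.range fun i => pderiv i W₂)).restrictScalars ℂ) :
    ∃ e : MvPolynomial (Fin n) ℂ ≃ₐ[ℂ] MvPolynomial (Fin n) ℂ, e W₁ = W₂ := by
  obtain ⟨m, L, hL, hLs⟩ := exists_L q hq
  have hfin := (finite_weight q hq 1).to_subtype
  have hV : IsWeightedHomogeneous q (W₂ - W₁) 1 :=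
    Submodule.sub_mem (weightedHomogeneousSubmodule ℂ q 1) hW₂ hW₁
  have hWt : ∀ t : ℂ, IsWeightedHomogeneous q (W₁ + t • (W₂ - W₁)) 1 := fun t =>
    hW₁.add (Submodule.smul_mem (weightedHomogeneousSubmodule ℂ q 1) t hV)
  have hlin : ∀ t : ℂ, (coefS q 1).comp (DD L (W₁ + t • (W₂ - W₁))) =
      (coefS q 1).comp (DD L W₁) + t • (coefS q 1).comp (DD L (W₂ - W₁)) := by
    intro t
    apply LinearMap.ext
    intro c
    have h0 : DD L (W₁ + t • (W₂ - W₁)) c = DD L W₁ c + t • DD L (W₂ - W₁) c := by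
      simp only [DD_apply, map_add, Derivation.map_smul, mul_add, mul_smul_comm,
        Finset.sum_add_distrib, Finset.smul_sum]
    simp only [LinearMap.comp_apply, h0, map_add, map_smul, LinearMap.add_apply,
      LinearMap.smul_apply]
  let S : Set ℂ := {t : ℂ | ¬ Function.Surjective
    ((coefS q 1).comp (DD L W₁) + t • (coefS q 1).comp (DD L (W₂ - W₁)))}
  have hS : S.Finite := finite_not_surj _ _ (DD_surj q hq L hLs W₁ hW₁ h₁)
  have hmem : ∀ t : ℂ, t ∈ Sᶜ ↔ Function.Surjective
      ((coefS q 1).comp (DD L (W₁ + t • (W₂ - W₁)))) := by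
    intro t
    rw [hlin]
    simp only [S, Set.mem_compl_iff, Set.mem_ofPred_eq, not_not]
  have hconn : IsPreconnected Sᶜ :=
    (hS.countable.isConnected_compl_of_one_lt_rank (by
      rw [Complex.rank_real_complex]; exact Nat.one_lt_ofNat)).isPreconnected
  have hm0 : (0 : ℂ) ∈ Sᶜ := by
    rw [hmem, zero_smul, add_zero]
    exact DD_surj q hq L hLs W₁ hW₁ h₁
  have hm1 : (1 : ℂ) ∈ Sᶜ := by
    rw [hmem, one_smul, add_sub_cancel]
    exact DD_surj q hq L hLs W₂ hW₂ h₂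
  have hfinal := hconn.induction₂ (fun s t => ∃ e : MvPolynomial (Fin n) ℂ ≃ₐ[ℂ]
    MvPolynomial (Fin n) ℂ, e (W₁ + s • (W₂ - W₁)) = W₁ + t • (W₂ - W₁)) ?_ ?_ ?_ hm0 hm1
  · simpa using hfinal
  · intro s hs
    have h := local_rel q hq L hL _ (hWt s) ((hmem s).mp hs) _ hV
    apply Filter.Eventually.filter_mono nhdsWithin_le_nhds
    have ht : Filter.Tendsto (fun t : ℂ => t - s) (𝓝 s) (𝓝 0) := by
      have : Continuous fun t : ℂ => t - s := by fun_prop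
      simpa using this.tendsto s
    filter_upwards [ht.eventually h] with t ⟨e, he⟩
    refine ⟨e, he.trans ?_⟩
    rw [add_assoc, ← add_smul, add_sub_cancel]
  · rintro x y z _ _ _ ⟨e, he⟩ ⟨e', he'⟩
    exact ⟨e.trans e', by rw [AlgEquiv.trans_apply, he, he']⟩
  · rintro x y _ _ ⟨e, he⟩
    exact ⟨e.symm, by rw [← he, AlgEquiv.symm_apply_apply]⟩
end WebbAux

/-- Webb's Theorem: two nondegenerate quasihomogeneous
polynomials with the same ordered weights in `(0,1)` have isomorphic Milnor
rings, provided the weighted-degree-1 component of `Q_{W₁}` vanishes. -/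
theorem webbs_theorem {n : ℕ}
    (W₁ W₂ : MvPolynomial (Fin n) ℂ) (q : Fin n → ℚ)
    (hq : ∀ i, 0 < q i ∧ q i < 1)
    (h₁ : Nondegenerate W₁) (h₂ : Nondegenerate W₂)
    (hqh₁ : IsQuasiHomogeneous W₁ q) (hqh₂ : IsQuasiHomogeneous W₂ q)
    (hdeg1 : gradedPiece W₁ q 1 = ⊥) :
    Nonempty (MilnorRing W₁ ≃ₐ[ℂ] MilnorRing W₂) := by
  have hq0 : ∀ i, 0 < q i := fun i => (hq i).1
  have hw : ∀ W : MvPolynomial (Fin n) ℂ, IsQuasiHomogeneous W q → IsWeightedHomogeneous q W 1 := by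
    intro W hW a ha
    rw [WebbAux.weight_eq]
    exact hW.2 a (mem_support_iff.mpr ha)
  have hw₁ := hw W₁ hqh₁
  have hw₂ := hw W₂ hqh₂
  have hd : ∀ W : MvPolynomial (Fin n) ℂ, IsWeightedHomogeneous q W 1 →
      ∀ i, IsWeightedHomogeneous q (pderiv i W) (1 - q i) :=
    fun W hW i => hW.pderiv (by ring)
  have hc : ∀ W : MvPolynomial (Fin n) ℂ, IsWeightedHomogeneous q W 1 →
      ∀ i, constantCoeff (pderiv i W) = 0 := by
    intro W hW i
    rw [constantCoeff_eq]
    apply (hd W hW i).coeff_eq_zero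
    rw [map_zero]
    have := (hq i).2
    intro h
    linarith
  have hR₁ : weightedHomogeneousSubmodule ℂ q 1 ≤
      (Ideal.span (Set.range fun i => pderiv i W₁)).restrictScalars ℂ := by
    intro p hp
    have h : (mkQ W₁).toLinearMap p ∈ gradedPiece W₁ q 1 := Submodule.mem_map_of_mem hp
    rw [hdeg1, Submodule.mem_bot] at h
    exact Ideal.Quotient.eq_zero_iff_mem.mp h
  have hR₂ := WebbAux.piece_eq q hq0 (fun i => pderiv i W₁) (fun i => pderiv i W₂)
    (fun i => 1 - q i) (hd W₁ hw₁) (hc W₁ hw₁) h₁ (hd W₂ hw₂) (hc W₂ hw₂) h₂ 1 hR₁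
  obtain ⟨e, he⟩ := WebbAux.exists_equiv q hq0 W₁ W₂ hw₁ hw₂ hR₁ hR₂
  refine ⟨Ideal.quotientEquivAlg _ _ e ?_⟩
  have hj := WebbAux.jac_eq e W₁
  rw [he] at hj
  exact hj
end
end
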